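/- arXiv:1805.09956 — 2 statements merged into one kernel-verified Lean document; each statement's English description precedes it below -/
import Mathlib

section
/- Let G be the ℓ×ℓ grid with n = ℓ² vertices and log₂ n ≥ 25 (so that η = 2^⌈√(log₂ n)⌉ > 16), let ρ be a positive integer with ρ ≤ √(log₂ n), and d_h = η^{ρ−h+3}. Let H̃ = (Q₁,…,Q_ρ) be a hierarchical system of squares of G disjoint from the top row R*, let L = (ℓ₁,…,ℓ_ρ) be a sequence of integral powers of η with ℓ₁ > … > ℓ_ρ, and let (J₁,…,J_ρ) be the L-hierarchical decomposition of R*. Suppose M̃** is a set of demand pairs with all sources distinct and lying on R* and all destinations distinct and belonging to H̃, such that M̃** is compatible with L and every square of H̃ has the (1/η²)-shadow property with respect to M̃**. Then there exist a valid coloring f of H̃ and a subset M̃' ⊆ M̃** such that M̃' is perfect for f and |M̃'| ≥ |M̃**|/2^ρ. -/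
/-!
Color the squares level by level, from the coarsest to the finest, keeping at each level at least
half of the surviving demand pairs.

The sources of the pairs with destination in a level-`h` square `Q` meet at most two level-`h`
intervals. Indeed, an interval met by these sources that contains neither the leftmost nor the
rightmost of them lies between the two, so all of its sources are in the shadow of `Q`; but
compatibility puts at least `d_h / (16 η)` sources in it, where `d_h` is the side of `Q`, and this
exceeds the `d_h / η ^ 2` sources that the shadow may hold, since `η > 16`. The color of `Q` is
the more popular of the two intervals. It lies in the color of the parent of `Q` because the
decompositions are nested and all surviving sources were already in that color.
-/

open Finset

abbrev Vtx := ℕ × ℕ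
abbrev DPair := Vtx × Vtx

/-- The grid graph on rows `r₁..r₂` and columns `c₁..c₂` (vertices outside are isolated). -/
def rectGrid (r₁ r₂ c₁ c₂ : ℕ) : SimpleGraph Vtx :=
  SimpleGraph.fromRel (fun u v =>
    r₁ ≤ u.1 ∧ u.1 ≤ r₂ ∧ c₁ ≤ u.2 ∧ u.2 ≤ c₂ ∧
    r₁ ≤ v.1 ∧ v.1 ≤ r₂ ∧ c₁ ≤ v.2 ∧ v.2 ≤ c₂ ∧
    ((u.1 = v.1 ∧ u.2 + 1 = v.2) ∨ (u.2 = v.2 ∧ u.1 + 1 = v.1)))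

/-- The ℓ×ℓ grid graph. -/
def gridG (ℓ : ℕ) : SimpleGraph Vtx := rectGrid 1 ℓ 1 ℓ

/-- The demand pairs of `M` can be simultaneously routed via node-disjoint paths in `G`. -/
def NodeDisjointRoutable {V : Type*} (G : SimpleGraph V) (M : Finset (V × V)) : Prop :=
  ∃ P : ∀ m : {m // m ∈ M}, G.Walk m.val.1 m.val.2,
    (∀ m, (P m).IsPath) ∧
    ∀ m m' : {m // m ∈ M}, m ≠ m' → ∀ x, x ∈ (P m).support → x ∉ (P m').support

def OnTopRow (ℓ : ℕ) (v : Vtx) : Prop := v.1 = 1 ∧ 1 ≤ v.2 ∧ v.2 ≤ ℓ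

def OnBoundary (ℓ : ℕ) (v : Vtx) : Prop :=
  1 ≤ v.1 ∧ v.1 ≤ ℓ ∧ 1 ≤ v.2 ∧ v.2 ≤ ℓ ∧ (v.1 = 1 ∨ v.1 = ℓ ∨ v.2 = 1 ∨ v.2 = ℓ)

def DistinctSources (M : Finset DPair) : Prop := ∀ m ∈ M, ∀ m' ∈ M, m.1 = m'.1 → m = m'
def DistinctDests (M : Finset DPair) : Prop := ∀ m ∈ M, ∀ m' ∈ M, m.2 = m'.2 → m = m'

noncomputable def lg (n : ℕ) : ℝ := Real.logb 2 n

def IsIntervalIn (W : ℕ) (I : Finset ℕ) : Prop :=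
  ∃ a b : ℕ, 1 ≤ a ∧ a ≤ b ∧ b ≤ W ∧ I = Finset.Icc a b

def IntSeparated (d : ℕ) (I J : Finset ℕ) : Prop :=
  ∀ i ∈ I, ∀ j ∈ J, (d : ℤ) < |(i : ℤ) - (j : ℤ)|

def IsCanonicalIntervals (W d : ℕ) (Is : Finset (Finset ℕ)) : Prop :=
  (∀ I ∈ Is, IsIntervalIn W I ∧ I.card = d) ∧
    ∀ I ∈ Is, ∀ J ∈ Is, I ≠ J → IntSeparated d I J

abbrev SquareSpec := Finset ℕ × Finset ℕ

def memSquare (v : Vtx) (Q : SquareSpec) : Prop := v.1 ∈ Q.1 ∧ v.2 ∈ Q.2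

instance (v : Vtx) (Q : SquareSpec) : Decidable (memSquare v Q) := by
  unfold memSquare; infer_instance

def IsCanonicalSquares (W d : ℕ) (Qs : Finset SquareSpec) : Prop :=
  ∃ I₁ I₂ : Finset (Finset ℕ),
    IsCanonicalIntervals W d I₁ ∧ IsCanonicalIntervals W d I₂ ∧ Qs = I₁ ×ˢ I₂

/-- The number of sources of `M` lying on the shadow of the square `Q` with respect to `M`,
i.e. on the shortest sub-path of the top row containing all sources of pairs of `M` whose
destination lies in `Q`. -/
def shadowCount (M : Finset DPair) (Q : SquareSpec) : ℕ :=
  (M.filter (fun m => ∃ m₁ ∈ M, memSquare m₁.2 Q ∧ ∃ m₂ ∈ M, memSquare m₂.2 Q ∧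
      m₁.1.2 ≤ m.1.2 ∧ m.1.2 ≤ m₂.1.2)).card

/-- The square `Q` (of side `d`) has the β-shadow property with respect to `M`. -/
def HasShadowProp (β : ℝ) (d : ℕ) (M : Finset DPair) (Q : SquareSpec) : Prop :=
  (shadowCount M Q : ℝ) ≤ β * d

/-- A hierarchical system of squares `Qs 1, …, Qs ρ`. -/
def IsHierSquares (W η ρ : ℕ) (Qs : ℕ → Finset SquareSpec) : Prop :=
  (∀ h, 1 ≤ h → h ≤ ρ → IsCanonicalSquares W (η ^ (ρ - h + 3)) (Qs h)) ∧
    ∀ h, 1 < h → h ≤ ρ → ∀ Q ∈ Qs h, ∃ Q' ∈ Qs (h - 1), Q.1 ⊆ Q'.1 ∧ Q.2 ⊆ Q'.2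

/-- `I` is an interval of the level-`h` decomposition of the first `W` vertices of the top
row into consecutive intervals of exactly `lh` vertices each (the last possibly shorter). -/
def IsLevelInterval (W lh : ℕ) (I : Finset ℕ) : Prop :=
  ∃ k : ℕ, k * lh < W ∧ I = Finset.Icc (k * lh + 1) (min ((k + 1) * lh) W)

/-- `M` is compatible with the sequence `L`. -/
def CompatibleWith (W ρ η : ℕ) (L : ℕ → ℕ) (M : Finset DPair) : Prop :=
  ∀ h, 1 ≤ h → h ≤ ρ → ∀ I, IsLevelInterval W (L h) I →
    (∀ m ∈ M, m.1.2 ∉ I) ∨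
    ((η : ℝ) ^ (ρ - h + 3) / (16 * η) ≤ ((M.filter (fun m => m.1.2 ∈ I)).card : ℝ) ∧
      ((M.filter (fun m => m.1.2 ∈ I)).card : ℝ) ≤ (η : ℝ) ^ (ρ - h + 3) / 4)

/-- A valid coloring `f` of the hierarchical system `Qs` with respect to the
`L`-hierarchical decomposition of the top row: each level-`h` square gets a level-`h`
interval, consistently with the parent structure. -/
def ValidColoring (W ρ : ℕ) (L : ℕ → ℕ) (Qs : ℕ → Finset SquareSpec)
    (f : ℕ → SquareSpec → Finset ℕ) : Prop :=
  (∀ h, 1 ≤ h → h ≤ ρ → ∀ Q ∈ Qs h, IsLevelInterval W (L h) (f h Q)) ∧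
    ∀ h, 1 < h → h ≤ ρ → ∀ Q ∈ Qs h, ∀ Q' ∈ Qs (h - 1),
      (Q.1 ⊆ Q'.1 ∧ Q.2 ⊆ Q'.2) → f h Q ⊆ f (h - 1) Q'

/-- `M` is a perfect set of demand pairs for the coloring `f`. -/
def PerfectFor (W ρ η : ℕ) (L : ℕ → ℕ) (Qs : ℕ → Finset SquareSpec)
    (f : ℕ → SquareSpec → Finset ℕ) (M : Finset DPair) : Prop :=
  DistinctSources M ∧ DistinctDests M ∧
    (∀ m ∈ M, ∀ Q ∈ Qs ρ, memSquare m.2 Q → m.1.2 ∈ f ρ Q) ∧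
    ∀ h, 1 ≤ h → h ≤ ρ → ∀ I, IsLevelInterval W (L h) I →
      (M.filter (fun m => m.1.2 ∈ I)).card ≤ η ^ (ρ - h + 3)

section Finite

variable {α : Type*} {s : Finset α} {p q : α → Prop} [DecidablePred p] [DecidablePred q]

lemma card_le_two_mul_card_filter_or (h : ∀ a ∈ s, p a ∨ q a) :
    #s ≤ 2 * #{a ∈ s | p a} ∨ #s ≤ 2 * #{a ∈ s | q a} := by
  classical
  have hsum : #s ≤ #{a ∈ s | p a} + #{a ∈ s | q a} := by
    conv_lhs => rw [← filter_true_of_mem h, filter_or]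
    exact card_union_le _ _
  omega

lemma card_le_mul_card_filter_of_fiberwise {ι : Type*} [DecidableEq ι] {t : Finset ι} {φ : α → ι}
    (hφ : ∀ a ∈ s, φ a ∈ t) {k : ℕ}
    (h : ∀ i ∈ t, #{a ∈ s | φ a = i} ≤ k * #{a ∈ s | φ a = i ∧ p a}) :
    #s ≤ k * #{a ∈ s | p a} :=
  calc #s = ∑ i ∈ t, #{a ∈ s | φ a = i} := card_eq_sum_card_fiberwise hφ
    _ ≤ ∑ i ∈ t, k * #{a ∈ s | φ a = i ∧ p a} := sum_le_sum h
    _ = k * ∑ i ∈ t, #{a ∈ {a ∈ s | p a} | φ a = i} := by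
      simp only [mul_sum, filter_filter, and_comm]
    _ = k * #{a ∈ s | p a} := by
      rw [← card_eq_sum_card_fiberwise fun a ha => hφ a (mem_of_mem_filter a ha)]

end Finite

lemma ordConnected_subset_Icc {α : Type*} [LinearOrder α] {s : Set α} (hs : s.OrdConnected)
    {a b x : α} (hx : x ∈ s) (ha : a ∉ s) (hb : b ∉ s) (hax : a ≤ x) (hxb : x ≤ b) :
    s ⊆ Set.Icc a b := fun _ hy =>
  ⟨le_of_not_ge fun hya => ha (hs.out hy hx ⟨hya, hax⟩),
    le_of_not_ge fun hby => hb (hs.out hx hy ⟨hxb, hby⟩)⟩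

namespace IsLevelInterval

variable {W a l : ℕ} {I J : Finset ℕ}

lemma Icc_one (hW : 0 < W) (hl : W ≤ l) : IsLevelInterval W l (Icc 1 W) :=
  ⟨0, by simpa only [zero_mul] using hW, by simp [hl]⟩

lemma ordConnected (hI : IsLevelInterval W l I) : (I : Set ℕ).OrdConnected := by
  obtain ⟨k, -, rfl⟩ := hI
  simpa only [coe_Icc] using Set.ordConnected_Icc

lemma nonempty (hI : IsLevelInterval W l I) (hl : 0 < l) : I.Nonempty := by
  obtain ⟨k, hk, rfl⟩ := hI
  rw [nonempty_Icc, le_min_iff, add_one_mul]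
  omega

lemma subset_Icc_one (hI : IsLevelInterval W l I) : I ⊆ Icc 1 W := by
  obtain ⟨k, -, rfl⟩ := hI
  exact Icc_subset_Icc (Nat.le_add_left _ _) (min_le_right _ _)

lemma exists_mem {x : ℕ} (hl : 0 < l) (hx : x ∈ Icc 1 W) : ∃ I, IsLevelInterval W l I ∧ x ∈ I := by
  obtain ⟨hx1, hxW⟩ := mem_Icc.1 hx
  have hlow : (x - 1) / l * l ≤ x - 1 := Nat.div_mul_le_self _ _
  have hhigh : x - 1 < ((x - 1) / l + 1) * l := by
    rw [add_one_mul]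
    exact Nat.lt_div_mul_add hl
  exact ⟨_, ⟨(x - 1) / l, by omega, rfl⟩, mem_Icc.2 ⟨by omega, le_min (by omega) hxW⟩⟩

lemma subset_of_mem {x : ℕ} (hI : IsLevelInterval W l I) (hJ : IsLevelInterval W a J) (hla : l ∣ a)
    (hxI : x ∈ I) (hxJ : x ∈ J) : I ⊆ J := by
  obtain ⟨i, -, rfl⟩ := hI
  obtain ⟨j, -, rfl⟩ := hJ
  obtain ⟨c, rfl⟩ := hla
  simp only [mem_Icc, le_min_iff] at hxI hxJ
  have hleft : j * c ≤ i := Nat.lt_succ_iff.1 <| Nat.lt_of_mul_lt_mul_right (a := l) <| by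
    calc j * c * l = j * (l * c) := by ring
      _ < x := hxJ.1
      _ ≤ (i + 1) * l := hxI.2.1
  have hright : i < (j + 1) * c := Nat.lt_of_mul_lt_mul_right (a := l) <| by
    calc i * l < x := hxI.1
      _ ≤ (j + 1) * (l * c) := hxJ.2.1
      _ = (j + 1) * c * l := by ring
  refine Icc_subset_Icc (Nat.succ_le_succ ?_) (min_le_min_right W ?_)
  · calc j * (l * c) = j * c * l := by ring
      _ ≤ i * l := Nat.mul_le_mul_right l hleft
  · calc (i + 1) * l ≤ (j + 1) * c * l := Nat.mul_le_mul_right l hright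
      _ = (j + 1) * (l * c) := by ring

lemma exists_subset_mem {x : ℕ} (hJ : IsLevelInterval W a J) (ha : 0 < a) (hla : l ∣ a)
    (hx : x ∈ J) : ∃ I ⊆ J, IsLevelInterval W l I ∧ x ∈ I := by
  obtain ⟨I, hI, hxI⟩ := exists_mem (Nat.pos_of_dvd_of_pos hla ha) (hJ.subset_Icc_one hx)
  exact ⟨I, hI.subset_of_mem hJ hla hxI hx, hI, hxI⟩

end IsLevelInterval

section CanonicalFamilies

variable {W d : ℕ}

lemma IsIntervalIn.nonempty {I : Finset ℕ} (hI : IsIntervalIn W I) : I.Nonempty := by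
  obtain ⟨a, b, -, hab, -, rfl⟩ := hI
  exact nonempty_Icc.2 hab

lemma IsIntervalIn.pos {I : Finset ℕ} (hI : IsIntervalIn W I) : 0 < W := by
  obtain ⟨a, b, ha, hab, hb, -⟩ := hI
  omega

lemma IsCanonicalIntervals.eq_of_mem {Is : Finset (Finset ℕ)} (hIs : IsCanonicalIntervals W d Is)
    {I J : Finset ℕ} (hI : I ∈ Is) (hJ : J ∈ Is) {x : ℕ} (hxI : x ∈ I) (hxJ : x ∈ J) : I = J := by
  by_contra hne
  have hsep : (d : ℤ) < |(x : ℤ) - x| := hIs.2 I hI J hJ hne x hxI x hxJ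
  rw [sub_self, abs_zero] at hsep
  omega

namespace IsCanonicalSquares

variable {Qs : Finset SquareSpec} {Q : SquareSpec}

lemma isIntervalIn (hQs : IsCanonicalSquares W d Qs) (hQ : Q ∈ Qs) :
    IsIntervalIn W Q.1 ∧ IsIntervalIn W Q.2 := by
  obtain ⟨I₁, I₂, h₁, h₂, rfl⟩ := hQs
  rw [mem_product] at hQ
  exact ⟨(h₁.1 _ hQ.1).1, (h₂.1 _ hQ.2).1⟩

lemma exists_memSquare (hQs : IsCanonicalSquares W d Qs) (hQ : Q ∈ Qs) : ∃ v, memSquare v Q := by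
  obtain ⟨i, hi⟩ := (hQs.isIntervalIn hQ).1.nonempty
  obtain ⟨j, hj⟩ := (hQs.isIntervalIn hQ).2.nonempty
  exact ⟨(i, j), hi, hj⟩

lemma pairwiseDisjoint (hQs : IsCanonicalSquares W d Qs) :
    (Qs : Set SquareSpec).PairwiseDisjoint fun Q => Q.1 ×ˢ Q.2 := by
  obtain ⟨I₁, I₂, h₁, h₂, rfl⟩ := hQs
  intro Q hQ Q' hQ' hne
  rw [mem_coe, mem_product] at hQ hQ'
  refine disjoint_left.2 fun v hv hv' => hne ?_
  rw [mem_product] at hv hv'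
  exact Prod.ext (h₁.eq_of_mem hQ.1 hQ'.1 hv.1 hv'.1) (h₂.eq_of_mem hQ.2 hQ'.2 hv.2 hv'.2)

end IsCanonicalSquares

end CanonicalFamilies

lemma eq_of_memSquare {Qs : Finset SquareSpec}
    (hQs : (Qs : Set SquareSpec).PairwiseDisjoint fun Q => Q.1 ×ˢ Q.2) {Q Q' : SquareSpec}
    (hQ : Q ∈ Qs) (hQ' : Q' ∈ Qs) {v : Vtx} (hv : memSquare v Q) (hv' : memSquare v Q') : Q = Q' :=
  hQs.elim_finset hQ hQ' v (mem_product.2 hv) (mem_product.2 hv')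

namespace IsHierSquares

variable {W η ρ : ℕ} {Qs : ℕ → Finset SquareSpec}

lemma exists_memSquare (hH : IsHierSquares W η ρ Qs) {v : Vtx} (hv : ∃ Q ∈ Qs ρ, memSquare v Q)
    {h : ℕ} (h1 : 1 ≤ h) (hhρ : h ≤ ρ) : ∃ Q ∈ Qs h, memSquare v Q := by
  induction hhρ using Nat.decreasingInduction with
  | self => exact hv
  | of_succ k hk ih =>
    obtain ⟨Q, hQ, hvQ⟩ := ih (by omega)
    obtain ⟨Q', hQ', hsub⟩ := hH.2 (k + 1) (by omega) hk Q hQ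
    exact ⟨Q', hQ', hsub.1 hvQ.1, hsub.2 hvQ.2⟩

lemma parent_unique (hH : IsHierSquares W η ρ Qs) {h : ℕ} (h1 : 1 ≤ h) (hhρ : h < ρ)
    {Q P P' : SquareSpec} (hQ : Q ∈ Qs (h + 1)) (hP : P ∈ Qs h) (hP' : P' ∈ Qs h)
    (hQP : Q.1 ⊆ P.1 ∧ Q.2 ⊆ P.2) (hQP' : Q.1 ⊆ P'.1 ∧ Q.2 ⊆ P'.2) : P = P' := by
  obtain ⟨v, hv⟩ := (hH.1 (h + 1) (by omega) hhρ).exists_memSquare hQ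
  exact eq_of_memSquare (hH.1 h h1 hhρ.le).pairwiseDisjoint hP hP'
    ⟨hQP.1 hv.1, hQP.2 hv.2⟩ ⟨hQP'.1 hv.1, hQP'.2 hv.2⟩

end IsHierSquares

section OneSquare

/-- The shadow of `Q` is thin at scale `l`: it holds fewer sources of `M` than any interval of the
decomposition of the top row into intervals of length `l` that contains a source at all. This is
what compatibility and the shadow property together give for `η > 16`. -/
def HasThinShadow (W l : ℕ) (M : Finset DPair) (Q : SquareSpec) : Prop :=
  ∀ I, IsLevelInterval W l I → ∀ m ∈ M, m.1.2 ∈ I → shadowCount M Q < #{m ∈ M | m.1.2 ∈ I}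

variable {W a l : ℕ} {M S : Finset DPair} {Q : SquareSpec} {J : Finset ℕ}

lemma card_filter_le_shadowCount {m₀ m₁ : DPair} (hm₀ : m₀ ∈ M) (hm₁ : m₁ ∈ M)
    (hQ₀ : memSquare m₀.2 Q) (hQ₁ : memSquare m₁.2 Q) {I : Finset ℕ}
    (hI : (I : Set ℕ) ⊆ Set.Icc m₀.1.2 m₁.1.2) : #{m ∈ M | m.1.2 ∈ I} ≤ shadowCount M Q :=
  card_le_card <| monotone_filter_right M fun _ _ hmI =>
    ⟨m₀, hm₀, hQ₀, m₁, hm₁, hQ₁, (hI hmI).1, (hI hmI).2⟩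

lemma HasThinShadow.mem_or_mem (hQ : HasThinShadow W l M Q) (hl : 0 < l) {m₀ m₁ m : DPair}
    (hm₀ : m₀ ∈ M) (hm₁ : m₁ ∈ M) (hQ₀ : memSquare m₀.2 Q) (hQ₁ : memSquare m₁.2 Q) (hm : m ∈ M)
    (hle₀ : m₀.1.2 ≤ m.1.2) (hle₁ : m.1.2 ≤ m₁.1.2) {I₀ I₁ : Finset ℕ}
    (hI₀ : IsLevelInterval W l I₀) (hI₁ : IsLevelInterval W l I₁)
    (h₀ : m₀.1.2 ∈ I₀) (h₁ : m₁.1.2 ∈ I₁) : m.1.2 ∈ I₀ ∨ m.1.2 ∈ I₁ := by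
  have hmW : m.1.2 ∈ Icc 1 W :=
    mem_Icc.2 ⟨(mem_Icc.1 (hI₀.subset_Icc_one h₀)).1.trans hle₀,
      hle₁.trans (mem_Icc.1 (hI₁.subset_Icc_one h₁)).2⟩
  obtain ⟨I, hI, hmI⟩ := IsLevelInterval.exists_mem hl hmW
  by_contra! hmem
  have hI_between : (I : Set ℕ) ⊆ Set.Icc m₀.1.2 m₁.1.2 :=
    ordConnected_subset_Icc hI.ordConnected hmI
      (fun h => hmem.1 (hI.subset_of_mem hI₀ dvd_rfl h h₀ hmI))
      (fun h => hmem.2 (hI.subset_of_mem hI₁ dvd_rfl h h₁ hmI)) hle₀ hle₁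
  exact (hQ I hI m hm hmI).not_ge (card_filter_le_shadowCount hm₀ hm₁ hQ₀ hQ₁ hI_between)

lemma HasThinShadow.exists_two_intervals_cover (hQ : HasThinShadow W l M Q) (ha : 0 < a)
    (hla : l ∣ a) (hJ : IsLevelInterval W a J) (hSM : S ⊆ M) (hSQ : ∀ m ∈ S, memSquare m.2 Q)
    (hSJ : ∀ m ∈ S, m.1.2 ∈ J) :
    ∃ I₀ ⊆ J, IsLevelInterval W l I₀ ∧ ∃ I₁ ⊆ J, IsLevelInterval W l I₁ ∧
      ∀ m ∈ S, m.1.2 ∈ I₀ ∨ m.1.2 ∈ I₁ := by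
  rcases S.eq_empty_or_nonempty with rfl | hS
  · obtain ⟨x, hx⟩ := hJ.nonempty ha
    obtain ⟨I, hIJ, hI, -⟩ := hJ.exists_subset_mem ha hla hx
    exact ⟨I, hIJ, hI, I, hIJ, hI, by simp⟩
  obtain ⟨m₀, hm₀, hleft⟩ := S.exists_min_image (fun m => m.1.2) hS
  obtain ⟨m₁, hm₁, hright⟩ := S.exists_max_image (fun m => m.1.2) hS
  obtain ⟨I₀, hI₀J, hI₀, hmI₀⟩ := hJ.exists_subset_mem ha hla (hSJ m₀ hm₀)
  obtain ⟨I₁, hI₁J, hI₁, hmI₁⟩ := hJ.exists_subset_mem ha hla (hSJ m₁ hm₁)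
  exact ⟨I₀, hI₀J, hI₀, I₁, hI₁J, hI₁, fun m hm =>
    hQ.mem_or_mem (Nat.pos_of_dvd_of_pos hla ha) (hSM hm₀) (hSM hm₁) (hSQ m₀ hm₀) (hSQ m₁ hm₁)
      (hSM hm) (hleft m hm) (hright m hm) hI₀ hI₁ hmI₀ hmI₁⟩

lemma HasThinShadow.exists_popular_interval (hQ : HasThinShadow W l M Q) (ha : 0 < a)
    (hla : l ∣ a) (hJ : IsLevelInterval W a J) (hSM : S ⊆ M) (hSQ : ∀ m ∈ S, memSquare m.2 Q)
    (hSJ : ∀ m ∈ S, m.1.2 ∈ J) :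
    ∃ I ⊆ J, IsLevelInterval W l I ∧ #S ≤ 2 * #{m ∈ S | m.1.2 ∈ I} := by
  obtain ⟨I₀, hI₀J, hI₀, I₁, hI₁J, hI₁, hcover⟩ :=
    hQ.exists_two_intervals_cover ha hla hJ hSM hSQ hSJ
  rcases card_le_two_mul_card_filter_or hcover with hcard | hcard
  · exact ⟨I₀, hI₀J, hI₀, hcard⟩
  · exact ⟨I₁, hI₁J, hI₁, hcard⟩

end OneSquare

section Coloring

/-- The pairs of `M` agree with the coloring `c` of the squares in `Qs`: the source of a pair lies
in the color of every square that contains its destination. For the squares of the last level this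
is the condition on destinations in `PerfectFor`. -/
def AgreesWithColoring (Qs : Finset SquareSpec) (c : SquareSpec → Finset ℕ)
    (M : Finset DPair) : Prop :=
  ∀ m ∈ M, ∀ Q ∈ Qs, memSquare m.2 Q → m.1.2 ∈ c Q

variable {W : ℕ}

/-- For levels `h > 1`, `c Q` is the color of the parent of `Q`; for `h = 1` it is the whole top
row. -/
lemma exists_finer_coloring {a l : ℕ} (ha : 0 < a) (hla : l ∣ a) {Qs : Finset SquareSpec}
    (hQs : (Qs : Set SquareSpec).PairwiseDisjoint fun Q => Q.1 ×ˢ Q.2) {M N : Finset DPair}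
    (hthin : ∀ Q ∈ Qs, HasThinShadow W l M Q) (hNM : N ⊆ M)
    (hdest : ∀ m ∈ N, ∃ Q ∈ Qs, memSquare m.2 Q) {c : SquareSpec → Finset ℕ}
    (hc : ∀ Q ∈ Qs, IsLevelInterval W a (c Q)) (hNc : AgreesWithColoring Qs c N) :
    ∃ g : SquareSpec → Finset ℕ, (∀ Q ∈ Qs, g Q ⊆ c Q ∧ IsLevelInterval W l (g Q)) ∧
      ∃ N' ⊆ N, #N ≤ 2 * #N' ∧ AgreesWithColoring Qs g N' := by
  choose! sq hsq hmem using hdest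
  have hpopular : ∀ Q ∈ Qs, ∃ I ⊆ c Q, IsLevelInterval W l I ∧
      #{m ∈ N | sq m = Q} ≤ 2 * #{m ∈ {m ∈ N | sq m = Q} | m.1.2 ∈ I} := by
    intro Q hQ
    have hdestQ : ∀ m ∈ {m ∈ N | sq m = Q}, memSquare m.2 Q := fun m hm => by
      obtain ⟨hmN, rfl⟩ := mem_filter.1 hm
      exact hmem m hmN
    exact (hthin Q hQ).exists_popular_interval ha hla (hc Q hQ) ((filter_subset _ _).trans hNM)
      hdestQ fun m hm => hNc m (mem_of_mem_filter m hm) Q hQ (hdestQ m hm)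
  choose! g hgc hg hhalf using hpopular
  refine ⟨g, fun Q hQ => ⟨hgc Q hQ, hg Q hQ⟩, {m ∈ N | m.1.2 ∈ g (sq m)}, filter_subset _ _,
    card_le_mul_card_filter_of_fiberwise hsq fun Q hQ => ?_, fun m hm Q hQ hmQ => ?_⟩
  · convert hhalf Q hQ using 3
    rw [filter_filter]
    exact filter_congr fun m _ => and_congr_right fun hm => by rw [hm]
  · obtain ⟨hmN, hmg⟩ := mem_filter.1 hm
    rwa [eq_of_memSquare hQs hQ (hsq m hmN) hmQ (hmem m hmN)]

variable {H : ℕ} {L : ℕ → ℕ} {Qs : ℕ → Finset SquareSpec}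

lemma ValidColoring.update {f : ℕ → SquareSpec → Finset ℕ} (hf : ValidColoring W H L Qs f)
    {g : SquareSpec → Finset ℕ} (hg : ∀ Q ∈ Qs (H + 1), IsLevelInterval W (L (H + 1)) (g Q))
    (hgf : ∀ Q ∈ Qs (H + 1), ∀ P ∈ Qs H, Q.1 ⊆ P.1 ∧ Q.2 ⊆ P.2 → g Q ⊆ f H P) :
    ValidColoring W (H + 1) L Qs (Function.update f (H + 1) g) := by
  have hold : ∀ h ≤ H, Function.update f (H + 1) g h = f h := fun h hh =>
    Function.update_of_ne (by omega) _ _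
  refine ⟨fun h h1 hh Q hQ => ?_, fun h h1 hh Q hQ P hP hQP => ?_⟩
  · rcases Nat.le_succ_iff.1 hh with hh | rfl
    · rw [hold h hh]
      exact hf.1 h h1 hh Q hQ
    · rw [Function.update_self]
      exact hg Q hQ
  · rw [hold (h - 1) (by omega)]
    rcases Nat.le_succ_iff.1 hh with hh | rfl
    · rw [hold h hh]
      exact hf.2 h h1 hh Q hQ P hP hQP
    · rw [Function.update_self]
      exact hgf Q hQ P hP hQP

variable {η ρ : ℕ} {M : Finset DPair}

lemma exists_coloring_first_level (hH : IsHierSquares W η ρ Qs) (hρ : 1 ≤ ρ) (hL : 0 < L 1)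
    (hsrc : ∀ m ∈ M, OnTopRow W m.1) (hdest : ∀ m ∈ M, ∃ Q ∈ Qs ρ, memSquare m.2 Q)
    (hthin : ∀ Q ∈ Qs 1, HasThinShadow W (L 1) M Q) :
    ∃ f : ℕ → SquareSpec → Finset ℕ, ValidColoring W 1 L Qs f ∧
      ∃ N ⊆ M, #M ≤ 2 * #N ∧ AgreesWithColoring (Qs 1) (f 1) N := by
  have hcanon := hH.1 1 le_rfl hρ
  have hWL : W ≤ (W + 1) * L 1 := W.le_succ.trans (Nat.le_mul_of_pos_right _ hL)
  obtain ⟨g, hg, N, hNM, hcard, hN⟩ := exists_finer_coloring (a := (W + 1) * L 1) (by positivity)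
    (dvd_mul_left _ _) hcanon.pairwiseDisjoint hthin subset_rfl
    (fun m hm => hH.exists_memSquare (hdest m hm) le_rfl hρ) (c := fun _ => Icc 1 W)
    (fun _ hQ => .Icc_one (hcanon.isIntervalIn hQ).1.pos hWL)
    (fun m hm _ _ _ => mem_Icc.2 (hsrc m hm).2)
  refine ⟨fun _ => g, ⟨fun h h1 hh Q hQ => ?_, fun h h1 hh => by omega⟩, N, hNM, hcard, hN⟩
  obtain rfl : h = 1 := le_antisymm hh h1
  exact (hg Q hQ).2

lemma exists_coloring_next_level (hH : IsHierSquares W η ρ Qs) (h1 : 1 ≤ H) (hHρ : H < ρ)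
    (hLpos : 0 < L H) (hLdvd : L (H + 1) ∣ L H)
    (hdest : ∀ m ∈ M, ∃ Q ∈ Qs ρ, memSquare m.2 Q)
    (hthin : ∀ Q ∈ Qs (H + 1), HasThinShadow W (L (H + 1)) M Q)
    {f : ℕ → SquareSpec → Finset ℕ} (hf : ValidColoring W H L Qs f) {N : Finset DPair}
    (hNM : N ⊆ M) (hN : AgreesWithColoring (Qs H) (f H) N) :
    ∃ f' : ℕ → SquareSpec → Finset ℕ, ValidColoring W (H + 1) L Qs f' ∧
      ∃ N' ⊆ N, #N ≤ 2 * #N' ∧ AgreesWithColoring (Qs (H + 1)) (f' (H + 1)) N' := by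
  choose! parent hparent hsub using hH.2 (H + 1) (by omega) hHρ
  rw [Nat.add_sub_cancel] at hparent
  obtain ⟨g, hg, N', hN'N, hcard, hN'⟩ := exists_finer_coloring hLpos hLdvd
    (hH.1 (H + 1) (by omega) hHρ).pairwiseDisjoint hthin hNM
    (fun m hm => hH.exists_memSquare (hdest m (hNM hm)) (by omega) hHρ)
    (c := fun Q => f H (parent Q)) (fun Q hQ => hf.1 H h1 le_rfl _ (hparent Q hQ))
    (fun m hm Q hQ hmQ => hN m hm _ (hparent Q hQ)
      ⟨(hsub Q hQ).1 hmQ.1, (hsub Q hQ).2 hmQ.2⟩)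
  refine ⟨Function.update f (H + 1) g, hf.update (fun Q hQ => (hg Q hQ).2) ?_, N', hN'N, hcard, ?_⟩
  · intro Q hQ P hP hQP
    rw [hH.parent_unique h1 hHρ hQ hP (hparent Q hQ) hQP (hsub Q hQ)]
    exact (hg Q hQ).1
  · rwa [Function.update_self]

lemma exists_coloring_up_to_level (hH : IsHierSquares W η ρ Qs)
    (hLpos : ∀ h, 1 ≤ h → h ≤ ρ → 0 < L h) (hLdvd : ∀ h, 1 ≤ h → h < ρ → L (h + 1) ∣ L h)
    (hsrc : ∀ m ∈ M, OnTopRow W m.1) (hdest : ∀ m ∈ M, ∃ Q ∈ Qs ρ, memSquare m.2 Q)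
    (hthin : ∀ h, 1 ≤ h → h ≤ ρ → ∀ Q ∈ Qs h, HasThinShadow W (L h) M Q)
    (h1 : 1 ≤ H) (hHρ : H ≤ ρ) :
    ∃ f : ℕ → SquareSpec → Finset ℕ, ValidColoring W H L Qs f ∧
      ∃ N ⊆ M, #M ≤ 2 ^ H * #N ∧ AgreesWithColoring (Qs H) (f H) N := by
  induction H, h1 using Nat.le_induction with
  | base =>
    rw [pow_one]
    exact exists_coloring_first_level hH hHρ (hLpos 1 le_rfl hHρ) hsrc hdest (hthin 1 le_rfl hHρ)
  | succ H h1 ih =>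
    obtain ⟨f, hf, N, hNM, hMN, hN⟩ := ih (by omega)
    obtain ⟨f', hf', N', hN'N, hNN', hN'⟩ := exists_coloring_next_level hH h1 hHρ
      (hLpos H h1 (by omega)) (hLdvd H h1 hHρ) hdest (hthin (H + 1) (by omega) hHρ) hf hNM hN
    refine ⟨f', hf', N', hN'N.trans hNM, ?_, hN'⟩
    calc #M ≤ 2 ^ H * #N := hMN
      _ ≤ 2 ^ H * (2 * #N') := Nat.mul_le_mul_left _ hNN'
      _ = 2 ^ (H + 1) * #N' := by ring

end Coloring

namespace CompatibleWith

variable {W ρ η h : ℕ} {L : ℕ → ℕ} {M : Finset DPair}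

lemma hasThinShadow (hM : CompatibleWith W ρ η L M) (hη : 16 < η) (h1 : 1 ≤ h) (hhρ : h ≤ ρ)
    {Q : SquareSpec} (hQ : HasShadowProp (1 / (η : ℝ) ^ 2) (η ^ (ρ - h + 3)) M Q) :
    HasThinShadow W (L h) M Q := by
  intro I hI m hm hmI
  have hcard : (η : ℝ) ^ (ρ - h + 3) / (16 * η) ≤ #{m ∈ M | m.1.2 ∈ I} :=
    ((hM h h1 hhρ I hI).resolve_left fun hnone => hnone m hm hmI).1
  have hη' : (16 : ℝ) < η := by exact_mod_cast hη
  have hshadow : (shadowCount M Q : ℝ) < #{m ∈ M | m.1.2 ∈ I} :=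
    calc (shadowCount M Q : ℝ) ≤ 1 / (η : ℝ) ^ 2 * (η ^ (ρ - h + 3) : ℕ) := hQ
      _ = (η : ℝ) ^ (ρ - h + 3) / (η * η) := by push_cast; ring
      _ < (η : ℝ) ^ (ρ - h + 3) / (16 * η) := by gcongr
      _ ≤ #{m ∈ M | m.1.2 ∈ I} := hcard
  exact_mod_cast hshadow

lemma card_filter_le (hM : CompatibleWith W ρ η L M) (h1 : 1 ≤ h) (hhρ : h ≤ ρ) {I : Finset ℕ}
    (hI : IsLevelInterval W (L h) I) : #{m ∈ M | m.1.2 ∈ I} ≤ η ^ (ρ - h + 3) := by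
  rcases hM h h1 hhρ I hI with hnone | ⟨-, hcard⟩
  · rw [filter_eq_empty_iff.2 hnone, card_empty]
    exact Nat.zero_le _
  · have hquarter : (η : ℝ) ^ (ρ - h + 3) / 4 ≤ (η : ℝ) ^ (ρ - h + 3) :=
      div_le_self (by positivity) (by norm_num)
    exact_mod_cast hcard.trans hquarter

end CompatibleWith

theorem statement4_general {W η ρ : ℕ} (hη : 16 < η) (hρ : 1 ≤ ρ)
    {Qs : ℕ → Finset SquareSpec} (hH : IsHierSquares W η ρ Qs) {L : ℕ → ℕ}
    (hLpos : ∀ h, 1 ≤ h → h ≤ ρ → 0 < L h) (hLdvd : ∀ h, 1 ≤ h → h < ρ → L (h + 1) ∣ L h)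
    {M : Finset DPair} (hds : DistinctSources M) (hdt : DistinctDests M)
    (hsrc : ∀ m ∈ M, OnTopRow W m.1) (hdest : ∀ m ∈ M, ∃ Q ∈ Qs ρ, memSquare m.2 Q)
    (hcompat : CompatibleWith W ρ η L M)
    (hshadow : ∀ h, 1 ≤ h → h ≤ ρ → ∀ Q ∈ Qs h,
      HasShadowProp (1 / (η : ℝ) ^ 2) (η ^ (ρ - h + 3)) M Q) :
    ∃ f : ℕ → SquareSpec → Finset ℕ, ValidColoring W ρ L Qs f ∧
      ∃ M' ⊆ M, PerfectFor W ρ η L Qs f M' ∧ (#M : ℝ) / 2 ^ ρ ≤ #M' := by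
  obtain ⟨f, hf, M', hM'M, hcard, hM'⟩ := exists_coloring_up_to_level hH hLpos hLdvd hsrc hdest
    (fun h h1 hhρ Q hQ => hcompat.hasThinShadow hη h1 hhρ (hshadow h h1 hhρ Q hQ)) hρ le_rfl
  have hload : ∀ h, 1 ≤ h → h ≤ ρ → ∀ I, IsLevelInterval W (L h) I →
      #{m ∈ M' | m.1.2 ∈ I} ≤ η ^ (ρ - h + 3) := fun h h1 hhρ I hI =>
    (card_le_card (filter_subset_filter _ hM'M)).trans (hcompat.card_filter_le h1 hhρ hI)
  refine ⟨f, hf, M', hM'M, ⟨fun m hm m' hm' => hds m (hM'M hm) m' (hM'M hm'),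
    fun m hm m' hm' => hdt m (hM'M hm) m' (hM'M hm'), hM', hload⟩, ?_⟩
  rw [div_le_iff₀' (by positivity)]
  exact_mod_cast hcard

lemma sixteen_lt_two_pow_ceil_sqrt {x : ℝ} (hx : 25 ≤ x) : 16 < 2 ^ ⌈√x⌉₊ := by
  have hsqrt : (5 : ℝ) ≤ √x := Real.le_sqrt_of_sq_le (by linarith)
  have hceil : 5 ≤ ⌈√x⌉₊ := by exact_mod_cast hsqrt.trans (Nat.le_ceil _)
  calc 16 < 2 ^ 5 := by norm_num
    _ ≤ 2 ^ ⌈√x⌉₊ := Nat.pow_le_pow_right two_pos hceil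

lemma dvd_of_le_of_eq_pow {b x y : ℕ} (hb : 0 < b) (hx : ∃ k, x = b ^ k) (hy : ∃ k, y = b ^ k)
    (hxy : x ≤ y) : x ∣ y := by
  obtain ⟨i, rfl⟩ := hx
  obtain ⟨j, rfl⟩ := hy
  exact (Nat.pow_dvd_pow_iff_pow_le_pow hb).2 hxy

/-- Theorem: existence of a perfect set for some valid coloring. -/
theorem statement4
    (ℓ n : ℕ) (hn : n = ℓ * ℓ) (hlog : (25 : ℝ) ≤ lg n)
    (η ρ : ℕ) (hη : η = 2 ^ ⌈Real.sqrt (lg n)⌉₊)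
    (hρ : 1 ≤ ρ) (hρ' : (ρ : ℝ) ≤ Real.sqrt (lg n))
    (Qs : ℕ → Finset SquareSpec) (hH : IsHierSquares ℓ η ρ Qs)
    (hdisj : ∀ h, 1 ≤ h → h ≤ ρ → ∀ Q ∈ Qs h, (1 : ℕ) ∉ Q.1)
    (L : ℕ → ℕ)
    (hLpow : ∀ h, 1 ≤ h → h ≤ ρ → ∃ k : ℕ, L h = η ^ k)
    (hLdec : ∀ h h', 1 ≤ h → h < h' → h' ≤ ρ → L h' < L h)
    (Mss : Finset DPair)
    (hds : DistinctSources Mss) (hdt : DistinctDests Mss)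
    (hsrc : ∀ m ∈ Mss, OnTopRow ℓ m.1)
    (hdest : ∀ m ∈ Mss, ∃ Q ∈ Qs ρ, memSquare m.2 Q)
    (hcompat : CompatibleWith ℓ ρ η L Mss)
    (hshadow : ∀ h, 1 ≤ h → h ≤ ρ → ∀ Q ∈ Qs h,
      HasShadowProp (1 / (η : ℝ) ^ 2) (η ^ (ρ - h + 3)) Mss Q) :
    ∃ f : ℕ → SquareSpec → Finset ℕ, ValidColoring ℓ ρ L Qs f ∧
      ∃ M' ⊆ Mss, PerfectFor ℓ ρ η L Qs f M' ∧
        (Mss.card : ℝ) / 2 ^ ρ ≤ (M'.card : ℝ) := by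
  have hη16 : 16 < η := hη ▸ sixteen_lt_two_pow_ceil_sqrt hlog
  exact statement4_general hη16 hρ hH
    (fun h h1 hh => (hLpow h h1 hh).elim fun _ hk => hk ▸ Nat.pow_pos (by omega))
    (fun h h1 hh => dvd_of_le_of_eq_pow (by omega) (hLpow (h + 1) (by omega) hh)
      (hLpow h h1 hh.le) (hLdec h (h + 1) h1 h.lt_succ_self hh).le)
    hds hdt hsrc hdest hcompat hshadow
end

section
/- Let G be the ℓ×ℓ grid with n = ℓ² vertices, η = 2^⌈√(log₂ n)⌉, ρ a positive integer with ρ ≤ √(log₂ n), d_h = η^{ρ−h+3}, and ℓ > 8·d₁. Let H̃ = (Q₁,…,Q_ρ) be a hierarchical system of squares of G disjoint from the top row R*, let (J₁,…,J_ρ) be the L-hierarchical decomposition of R* for some sequence L = (ℓ₁,…,ℓ_ρ) of integral powers of η with ℓ₁ > … > ℓ_ρ, let f be a valid coloring of H̃, and let M̃' be a set of demand pairs that is perfect for f, with |M̃'| ≤ d₁, all sources on R*, and every destination at distance greater than 4·d₁ from the boundary Γ(G). Then there exists a set of pairwise node-disjoint paths in G routing at least ⌈|M̃'|/(2η³)⌉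 demand pairs of M̃'. -/
/-!
List the demand pairs by increasing source and keep every `η ^ 3`-th of them as the wires
`0, 1, …, K - 1`; all of these get routed. A level-`h` interval, which contains at most
`d_h = η ^ 3 * η ^ (ρ - h)` sources of demand pairs, contains the sources of at most `η ^ (ρ - h)`
wires, and these wires are consecutive.

By induction from level `ρ` to level `1`, the wires whose sources lie in the interval of a square of
side `d` can cross its `d / 4`-neighbourhood, in order from the top of the left side to the bottom
of the right side, so that each wire with destination in the square visits it. At level `ρ` there
is at most one wire, which takes the whole box. In the induction step the bundle of wires winds
through the boxes of the child squares like a snake: it traverses every row of boxes from left to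
right and returns below that row. At each box, the wires that belong to the child run through it,
the smaller wires pass above and the larger ones below. This is planar because the wires of the
child are consecutive, and there is room because squares of one level are far apart compared to
the width of the bundle. The same snake crosses a big box of the grid that contains all relevant
level-1 squares; the sources are joined to it along the top and the right side of the grid.

A wire that has visited its destination must still leave the box, so a wire is a connected set of
vertices rather than a path; disjoint connected sets contain the desired disjoint paths.
-/

open Finset

namespace SnakeRouting

/-! ### Linkages by connected sets -/

section Linkage

variable {V ι : Type*} {G : SimpleGraph V}

lemma preconnected_of_forall_exists_adj_lt (root : V) (height : V → ℕ)
    (h : ∀ v ≠ root, ∃ w, G.Adj v w ∧ height w < height v) : G.Preconnected := by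
  have reachable_root : ∀ v, G.Reachable v root := by
    intro v
    induction hn : height v using Nat.strong_induction_on generalizing v with
    | _ n ih =>
      subst hn
      rcases eq_or_ne v root with rfl | hv
      · exact .rfl
      · obtain ⟨w, hadj, hlt⟩ := h v hv
        exact hadj.reachable.trans (ih _ hlt w rfl)
  exact fun u v => (reachable_root u).trans (reachable_root v).symm

lemma dist_le_of_forall_adj_succ (p : ℕ → V) (k : ℕ) (h : ∀ i < k, G.Adj (p i) (p (i + 1))) :
    G.dist (p 0) (p k) ≤ k := by
  obtain ⟨P, hP⟩ : ∃ P : G.Walk (p 0) (p k), P.length = k := by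
    induction k with
    | zero => exact ⟨.nil, rfl⟩
    | succ k ih =>
      obtain ⟨P, hP⟩ := ih fun i hi => h i (by omega)
      exact ⟨P.concat (h k (by omega)), by rw [SimpleGraph.Walk.length_concat, hP]⟩
  exact (SimpleGraph.dist_le P).trans hP.le

lemma preconnected_induce_union {S T : Set V} {x : V} (hS : (G.induce S).Preconnected)
    (hT : (G.induce T).Preconnected) (hxS : x ∈ S) (hxT : x ∈ T) :
    (G.induce (S ∪ T)).Preconnected :=
  (SimpleGraph.induce_union_connected hS hT ⟨x, hxS, hxT⟩).preconnected

lemma preconnected_induce_union_of_adj {S T : Set V} {x y : V} (hS : (G.induce S).Preconnected)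
    (hT : (G.induce T).Preconnected) (hx : x ∈ S) (hy : y ∈ T) (hadj : G.Adj x y) :
    (G.induce (S ∪ T)).Preconnected := by
  have hSxy := preconnected_induce_union hS
    (SimpleGraph.induce_pair_connected_of_adj hadj).preconnected hx (Set.mem_insert x {y})
  have hSxyT := preconnected_induce_union hSxy hT (Or.inr (Set.mem_insert_of_mem x rfl)) hy
  rwa [Set.union_assoc, Set.insert_union, Set.singleton_union, Set.insert_eq_of_mem hy,
    Set.union_insert, Set.insert_eq_of_mem (show x ∈ S ∪ T from Or.inl hx)] at hSxyT

/-- Vertex-disjoint connected sets `S i ⊆ R`, one for each colour `i ∈ C`, each containing its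
entry `A i`, its exit `B i` and its targets `T i`. Connected sets stand in for paths: disjoint
connected sets contain disjoint paths between their points, and no path has to be written down. -/
def HasLinkage (G : SimpleGraph V) (C : Set ι) (R : Set V) (A B : ι → V) (T : ι → Set V) : Prop :=
  ∃ S : ι → Set V, C.PairwiseDisjoint S ∧ ∀ i ∈ C,
    (G.induce (S i)).Preconnected ∧ S i ⊆ R ∧ A i ∈ S i ∧ B i ∈ S i ∧ T i ⊆ S i

namespace HasLinkage

variable {C C' : Set ι} {R R' : Set V} {A B A' B' : ι → V} {T T' : ι → Set V}

lemma mono (h : HasLinkage G C R A B T) (hR : R ⊆ R') (hT : ∀ i ∈ C, T' i ⊆ T i) :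
    HasLinkage G C R' A B T' := by
  obtain ⟨S, hdisj, hS⟩ := h
  refine ⟨S, hdisj, fun i hi => ?_⟩
  obtain ⟨hconn, hsub, hA, hB, hTS⟩ := hS i hi
  exact ⟨hconn, hsub.trans hR, hA, hB, (hT i hi).trans hTS⟩

lemma congr (h : HasLinkage G C R A B T) (hA : Set.EqOn A A' C) (hB : Set.EqOn B B' C) :
    HasLinkage G C R A' B' T := by
  obtain ⟨S, hdisj, hS⟩ := h
  exact ⟨S, hdisj, fun i hi => hA hi ▸ hB hi ▸ hS i hi⟩

lemma symm (h : HasLinkage G C R A B T) : HasLinkage G C R B A T := by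
  obtain ⟨S, hdisj, hS⟩ := h
  refine ⟨S, hdisj, fun i hi => ?_⟩
  obtain ⟨hconn, hsub, hA, hB, hTS⟩ := hS i hi
  exact ⟨hconn, hsub, hB, hA, hTS⟩

lemma trans (h : HasLinkage G C R A B T) (h' : HasLinkage G C R' A' B' T') (hR : Disjoint R R')
    (hadj : ∀ i ∈ C, G.Adj (B i) (A' i)) :
    HasLinkage G C (R ∪ R') A B' (fun i => T i ∪ T' i) := by
  obtain ⟨S, hdisj, hS⟩ := h
  obtain ⟨S', hdisj', hS'⟩ := h'
  refine ⟨fun i => S i ∪ S' i, fun i hi j hj hij => ?_, fun i hi => ?_⟩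
  · simp only [Function.onFun, Set.disjoint_union_left, Set.disjoint_union_right]
    exact ⟨⟨hdisj hi hj hij, (hR.mono (hS j hj).2.1 (hS' i hi).2.1).symm⟩,
      hR.mono (hS i hi).2.1 (hS' j hj).2.1, hdisj' hi hj hij⟩
  · obtain ⟨hconn, hsub, hA, hB, hTS⟩ := hS i hi
    obtain ⟨hconn', hsub', hA', hB', hTS'⟩ := hS' i hi
    exact ⟨preconnected_induce_union_of_adj hconn hconn' hB hA' (hadj i hi),
      Set.union_subset_union hsub hsub', Or.inl hA, Or.inr hB', Set.union_subset_union hTS hTS'⟩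

lemma union (h : HasLinkage G C R A B T) (h' : HasLinkage G C' R' A B T) (hR : Disjoint R R')
    (hC : Disjoint C C') : HasLinkage G (C ∪ C') (R ∪ R') A B T := by
  classical
  obtain ⟨S, hdisj, hS⟩ := h
  obtain ⟨S', hdisj', hS'⟩ := h'
  have hleft : ∀ i ∈ C, C.piecewise S S' i = S i := fun i hi =>
    C.piecewise_eq_of_mem _ _ hi
  have hright : ∀ i ∈ C', C.piecewise S S' i = S' i := fun i hi =>
    C.piecewise_eq_of_notMem _ _ (Set.disjoint_right.1 hC hi)
  refine ⟨C.piecewise S S', ?_, ?_⟩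
  · rintro i (hi | hi) j (hj | hj) hij <;>
      simp only [Function.onFun, hleft, hright, hi, hj]
    · exact hdisj hi hj hij
    · exact hR.mono (hS i hi).2.1 (hS' j hj).2.1
    · exact (hR.mono (hS j hj).2.1 (hS' i hi).2.1).symm
    · exact hdisj' hi hj hij
  · rintro i (hi | hi)
    · rw [hleft i hi]
      obtain ⟨hconn, hsub, hrest⟩ := hS i hi
      exact ⟨hconn, hsub.trans Set.subset_union_left, hrest⟩
    · rw [hright i hi]
      obtain ⟨hconn, hsub, hrest⟩ := hS' i hi
      exact ⟨hconn, hsub.trans Set.subset_union_right, hrest⟩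

end HasLinkage

lemma exists_isPath_support_subset_of_preconnected {S : Set V}
    (hS : (G.induce S).Preconnected) {u v : V} (hu : u ∈ S) (hv : v ∈ S) :
    ∃ P : G.Walk u v, P.IsPath ∧ ∀ x ∈ P.support, x ∈ S := by
  classical
  obtain ⟨W⟩ := hS ⟨u, hu⟩ ⟨v, hv⟩
  let W' : G.Walk u v := W.map (SimpleGraph.Embedding.induce S).toHom
  refine ⟨W'.bypass, W'.bypass_isPath, fun x hx => ?_⟩
  have hx' : x ∈ W.support.map (SimpleGraph.Embedding.induce S).toHom :=
    W.support_map _ ▸ W'.support_bypass_subset_support hx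
  obtain ⟨z, -, rfl⟩ := List.mem_map.1 hx'
  exact z.2

lemma nodeDisjointRoutable_image [DecidableEq V] {I : Finset ι} {S : ι → Set V}
    (hdisj : (I : Set ι).PairwiseDisjoint S) (hS : ∀ i ∈ I, (G.induce (S i)).Preconnected)
    {g : ι → V × V} (hg : ∀ i ∈ I, (g i).1 ∈ S i ∧ (g i).2 ∈ S i) :
    NodeDisjointRoutable G (I.image g) := by
  have hcolour : ∀ m : {m // m ∈ I.image g}, ∃ i ∈ I, g i = m.1 := fun m => mem_image.1 m.2
  choose colour hmem hcolour using hcolour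
  have hpath : ∀ m : {m // m ∈ I.image g}, ∃ P : G.Walk m.1.1 m.1.2,
      P.IsPath ∧ ∀ x ∈ P.support, x ∈ S (colour m) := fun m =>
    exists_isPath_support_subset_of_preconnected (hS _ (hmem m))
      (hcolour m ▸ (hg _ (hmem m)).1) (hcolour m ▸ (hg _ (hmem m)).2)
  choose P hP hsupp using hpath
  refine ⟨P, hP, fun m m' hne x hx hx' => ?_⟩
  have hne' : colour m ≠ colour m' := fun h =>
    hne (Subtype.ext (by rw [← hcolour m, ← hcolour m', h]))
  exact Set.disjoint_left.1 (hdisj (hmem m) (hmem m') hne') (hsupp m x hx) (hsupp m' x hx')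

end Linkage

/-! ### Wires in the integer grid -/

/-- The infinite grid graph, first coordinate the row. Integer coordinates avoid truncated
subtraction in the constructions. -/
noncomputable def intGrid : SimpleGraph (ℤ × ℤ) := SimpleGraph.hasse (ℤ × ℤ)

lemma intGrid_adj_iff {u v : ℤ × ℤ} : intGrid.Adj u v ↔
    (u.1 = v.1 ∧ (u.2 + 1 = v.2 ∨ v.2 + 1 = u.2)) ∨
      (u.2 = v.2 ∧ (u.1 + 1 = v.1 ∨ v.1 + 1 = u.1)) := by
  rw [intGrid, SimpleGraph.hasse_adj]
  simp only [Prod.covBy_iff, Order.covBy_iff_add_one_eq]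
  omega

/-- The vertices in rows `r₁..r₂` and columns `c₁..c₂`. -/
def rect (r₁ r₂ c₁ c₂ : ℤ) : Set (ℤ × ℤ) := Set.Icc r₁ r₂ ×ˢ Set.Icc c₁ c₂

lemma mem_rect {r₁ r₂ c₁ c₂ : ℤ} {z : ℤ × ℤ} :
    z ∈ rect r₁ r₂ c₁ c₂ ↔ r₁ ≤ z.1 ∧ z.1 ≤ r₂ ∧ c₁ ≤ z.2 ∧ z.2 ≤ c₂ := by
  simp only [rect, Set.mem_prod, Set.mem_Icc, and_assoc]

lemma preconnected_rect (r₁ r₂ c₁ c₂ : ℤ) : (intGrid.induce (rect r₁ r₂ c₁ c₂)).Preconnected := by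
  by_cases hne : r₁ ≤ r₂ ∧ c₁ ≤ c₂
  · refine preconnected_of_forall_exists_adj_lt
      ⟨(r₁, c₁), mem_rect.2 ⟨le_rfl, hne.1, le_rfl, hne.2⟩⟩
      (fun z => (z.1.1 - r₁ + (z.1.2 - c₁)).toNat) ?_
    rintro ⟨⟨r, c⟩, hz⟩ hcorner
    obtain ⟨hr₁, hr₂, hc₁, hc₂⟩ := mem_rect.1 hz
    simp only [ne_eq, Subtype.mk.injEq, Prod.mk.injEq] at hcorner hr₁ hr₂ hc₁ hc₂
    by_cases hr : r = r₁
    · refine ⟨⟨(r, c - 1), mem_rect.2 (by simp only; omega)⟩,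
        intGrid_adj_iff.2 (.inl ⟨rfl, .inr (sub_add_cancel c 1)⟩), by simp only; omega⟩
    · refine ⟨⟨(r - 1, c), mem_rect.2 (by simp only; omega)⟩,
        intGrid_adj_iff.2 (.inr ⟨rfl, .inr (sub_add_cancel r 1)⟩), by simp only; omega⟩
  · rintro ⟨z, hz⟩
    have := mem_rect.1 hz
    omega

/-- The wire from `p` through the corners `l`, taken in order. Consecutive corners should agree in a
coordinate; otherwise the piece between them is the rectangle they span. -/
def wire (p : ℤ × ℤ) : List (ℤ × ℤ) → Set (ℤ × ℤ)
  | [] => {p}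
  | q :: l => Set.uIcc p q ∪ wire q l

lemma uIcc_eq_rect (p q : ℤ × ℤ) :
    Set.uIcc p q = rect (min p.1 q.1) (max p.1 q.1) (min p.2 q.2) (max p.2 q.2) := by
  ext z
  rw [mem_rect, Set.uIcc, Set.mem_Icc, Prod.le_def, Prod.le_def]
  simp only [Prod.fst_inf, Prod.snd_inf, Prod.fst_sup, Prod.snd_sup]
  tauto

lemma mem_wire_nil {p z : ℤ × ℤ} : z ∈ wire p [] ↔ z.1 = p.1 ∧ z.2 = p.2 := by
  rw [wire, Set.mem_singleton_iff, Prod.ext_iff]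

lemma mem_wire_cons {p q z : ℤ × ℤ} {l : List (ℤ × ℤ)} : z ∈ wire p (q :: l) ↔
    (min p.1 q.1 ≤ z.1 ∧ z.1 ≤ max p.1 q.1 ∧ min p.2 q.2 ≤ z.2 ∧ z.2 ≤ max p.2 q.2) ∨
      z ∈ wire q l := by
  rw [wire, Set.mem_union, uIcc_eq_rect, mem_rect]

lemma start_mem_wire (p : ℤ × ℤ) : ∀ l, p ∈ wire p l
  | [] => rfl
  | _ :: _ => Or.inl Set.left_mem_uIcc

lemma getLastD_mem_wire (p : ℤ × ℤ) (l : List (ℤ × ℤ)) : l.getLastD p ∈ wire p l := by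
  induction l generalizing p with
  | nil => rfl
  | cons q l ih =>
    rw [List.getLastD_cons]
    exact Or.inr (ih q)

lemma preconnected_wire (p : ℤ × ℤ) (l : List (ℤ × ℤ)) :
    (intGrid.induce (wire p l)).Preconnected := by
  induction l generalizing p with
  | nil =>
    rw [wire]
    exact SimpleGraph.Preconnected.of_subsingleton
  | cons q l ih =>
    have hpq : (intGrid.induce (Set.uIcc p q)).Preconnected := by
      rw [uIcc_eq_rect]
      exact preconnected_rect _ _ _ _
    exact preconnected_induce_union hpq (ih q) Set.right_mem_uIcc (start_mem_wire q l)

lemma hasLinkage_wires {ι : Type*} [LinearOrder ι] {C : Set ι} {R : Set (ℤ × ℤ)}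
    (A : ι → ℤ × ℤ) (corners : ι → List (ℤ × ℤ)) (hsub : ∀ i ∈ C, wire (A i) (corners i) ⊆ R)
    (hdisj : ∀ i ∈ C, ∀ j ∈ C, i < j →
      ∀ z ∈ wire (A i) (corners i), z ∉ wire (A j) (corners j)) :
    HasLinkage intGrid C R A (fun i => (corners i).getLastD (A i)) (fun _ => ∅) := by
  refine ⟨fun i => wire (A i) (corners i), fun i hi j hj hij => ?_, fun i hi =>
    ⟨preconnected_wire _ _, hsub i hi, start_mem_wire _ _, getLastD_mem_wire _ _,
      Set.empty_subset _⟩⟩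
  rcases lt_or_gt_of_ne hij with h | h
  · exact Set.disjoint_left.2 (hdisj i hi j hj h)
  · exact Set.disjoint_right.2 (hdisj j hj i hi h)

namespace HasLinkage

variable {C : Set ℕ} {r₁ r₂ c₁ c₂ m m' : ℤ} {A B A' B' : ℕ → ℤ × ℤ} {T T' : ℕ → Set (ℤ × ℤ)}

lemma trans_right (h : HasLinkage intGrid C (rect r₁ r₂ c₁ m) A B T)
    (h' : HasLinkage intGrid C (rect r₁ r₂ m' c₂) A' B' T') (hm : m + 1 = m') (hc₁ : c₁ ≤ m')
    (hc₂ : m ≤ c₂) (hadj : ∀ i ∈ C, (B i).1 = (A' i).1 ∧ (B i).2 + 1 = (A' i).2) :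
    HasLinkage intGrid C (rect r₁ r₂ c₁ c₂) A B' (fun i => T i ∪ T' i) := by
  refine (h.trans h' (Set.disjoint_left.2 fun z => ?_) fun i hi =>
    intGrid_adj_iff.2 (.inl ⟨(hadj i hi).1, .inl (hadj i hi).2⟩)).mono (fun z => ?_)
    fun _ _ => subset_rfl
  all_goals
    simp only [Set.mem_union, mem_rect]
    omega

lemma trans_below (h : HasLinkage intGrid C (rect r₁ m c₁ c₂) A B T)
    (h' : HasLinkage intGrid C (rect m' r₂ c₁ c₂) A' B' T') (hm : m + 1 = m') (hr₁ : r₁ ≤ m')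
    (hr₂ : m ≤ r₂) (hadj : ∀ i ∈ C, (B i).2 = (A' i).2 ∧ (B i).1 + 1 = (A' i).1) :
    HasLinkage intGrid C (rect r₁ r₂ c₁ c₂) A B' (fun i => T i ∪ T' i) := by
  refine (h.trans h' (Set.disjoint_left.2 fun z => ?_) fun i hi =>
    intGrid_adj_iff.2 (.inr ⟨(hadj i hi).1, .inl (hadj i hi).2⟩)).mono (fun z => ?_)
    fun _ _ => subset_rfl
  all_goals
    simp only [Set.mem_union, mem_rect]
    omega

end HasLinkage

/-! ### Bundles of wires -/

/-- The ports of the wires `i ≥ a` on column `c`: wire `a` in row `r` and each next wire one row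
further down. -/
def rowPorts (a : ℕ) (r c : ℤ) (i : ℕ) : ℤ × ℤ := (r + (i - a), c)

/-- The ports of the wires `i < b` on row `r`: wire `b - 1` in column `c` and each smaller wire one
column further to the right, which is the order in which wires leaving row ports rightwards arrive
after a right turn. -/
def colPorts (b : ℕ) (r c : ℤ) (i : ℕ) : ℤ × ℤ := (r, c + (b - 1 - i))

lemma hasLinkage_horizontal {C : Set ℕ} {R : Set ℤ} {x : ℕ → ℤ} {c₁ c₂ : ℤ} (hc : c₁ ≤ c₂)
    (hinj : Set.InjOn x C) (hx : Set.MapsTo x C R) :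
    HasLinkage intGrid C (R ×ˢ Set.Icc c₁ c₂) (fun i => (x i, c₁)) (fun i => (x i, c₂))
      (fun _ => ∅) := by
  refine hasLinkage_wires (fun i => (x i, c₁)) (fun i => [(x i, c₂)]) ?_ ?_
  · intro i hi z hz
    simp only [mem_wire_cons, mem_wire_nil] at hz
    have hrow : z.1 = x i := by omega
    exact ⟨hrow ▸ hx hi, by rw [Set.mem_Icc]; omega⟩
  · intro i hi j hj hij z
    have := hinj.ne hi hj hij.ne
    simp only [mem_wire_cons, mem_wire_nil]
    omega

section Bundles

variable {a b : ℕ} {r₁ r₂ c₁ c₂ : ℤ}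

lemma hasLinkage_rowPorts {r : ℤ} (hr₁ : r₁ ≤ r) (hr₂ : r + (b - a) ≤ r₂ + 1) (hc : c₁ ≤ c₂) :
    HasLinkage intGrid (Set.Ico a b) (rect r₁ r₂ c₁ c₂) (rowPorts a r c₁) (rowPorts a r c₂)
      (fun _ => ∅) := by
  refine hasLinkage_horizontal hc (fun i _ j _ h => by simpa using h) fun i hi => ?_
  rw [Set.mem_Ico] at hi
  rw [Set.mem_Icc]
  omega

lemma hasLinkage_colPorts (hr : r₁ ≤ r₂) (hc : c₁ + (b - a) ≤ c₂ + 1) :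
    HasLinkage intGrid (Set.Ico a b) (rect r₁ r₂ c₁ c₂) (colPorts b r₁ c₁) (colPorts b r₂ c₁)
      (fun _ => ∅) := by
  refine hasLinkage_wires (colPorts b r₁ c₁) (fun i => [colPorts b r₂ c₁ i]) ?_ ?_
  · intro i hi z
    simp only [colPorts, mem_wire_cons, mem_wire_nil, mem_rect, Set.mem_Ico] at hi ⊢
    omega
  · intro i _ j _ hij z
    simp only [colPorts, mem_wire_cons, mem_wire_nil]
    omega

lemma hasLinkage_rowPorts_colPorts (hr : r₁ + (b - a) ≤ r₂ + 1) (hc : c₁ + (b - a) ≤ c₂ + 1) :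
    HasLinkage intGrid (Set.Ico a b) (rect r₁ r₂ c₁ c₂) (rowPorts a r₁ c₁) (colPorts b r₂ c₁)
      (fun _ => ∅) := by
  refine hasLinkage_wires (rowPorts a r₁ c₁)
    (fun i => [(r₁ + (i - a), c₁ + (b - 1 - i)), colPorts b r₂ c₁ i]) ?_ ?_
  · intro i hi z
    simp only [rowPorts, colPorts, mem_wire_cons, mem_wire_nil, mem_rect, Set.mem_Ico] at hi ⊢
    omega
  · intro i hi j hj hij z
    simp only [rowPorts, colPorts, mem_wire_cons, mem_wire_nil, Set.mem_Ico] at hi hj ⊢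
    omega

lemma hasLinkage_colPorts_rowPorts (hr : r₁ + (b - a) ≤ r₂ + 1) (hc : c₁ + (b - a) ≤ c₂ + 1) :
    HasLinkage intGrid (Set.Ico a b) (rect r₁ r₂ c₁ c₂) (colPorts b r₁ c₁) (rowPorts a r₁ c₂)
      (fun _ => ∅) := by
  refine hasLinkage_wires (colPorts b r₁ c₁)
    (fun i => [(r₁ + (i - a), c₁ + (b - 1 - i)), rowPorts a r₁ c₂ i]) ?_ ?_
  · intro i hi z
    simp only [rowPorts, colPorts, mem_wire_cons, mem_wire_nil, mem_rect, Set.mem_Ico] at hi ⊢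
    omega
  · intro i hi j hj hij z
    simp only [rowPorts, colPorts, mem_wire_cons, mem_wire_nil, Set.mem_Ico] at hi hj ⊢
    omega

/-- Each wire changes rows in a column of its own; wires going down and wires going up take these
columns in opposite orders. -/
lemma hasLinkage_shift {x y : ℕ → ℤ} (hc : c₁ + (b - a) ≤ c₂ + 1)
    (hx_mono : StrictMonoOn x (Set.Ico a b)) (hy_mono : StrictMonoOn y (Set.Ico a b))
    (hx : ∀ i ∈ Set.Ico a b, r₁ ≤ x i ∧ x i ≤ r₂) (hy : ∀ i ∈ Set.Ico a b, r₁ ≤ y i ∧ y i ≤ r₂) :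
    HasLinkage intGrid (Set.Ico a b) (rect r₁ r₂ c₁ c₂) (fun i => (x i, c₁)) (fun i => (y i, c₂))
      (fun _ => ∅) := by
  let turn (i : ℕ) : ℤ := if x i ≤ y i then c₁ + (b - 1 - i) else c₁ + (i - a)
  have hturn (i : ℕ) :
      x i ≤ y i ∧ turn i = c₁ + (b - 1 - i) ∨ y i < x i ∧ turn i = c₁ + (i - a) := by
    simp only [turn]
    split_ifs <;> omega
  refine hasLinkage_wires (fun i => (x i, c₁))
    (fun i => [(x i, turn i), (y i, turn i), (y i, c₂)]) ?_ ?_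
  · intro i hi z
    have := hx i hi
    have := hy i hi
    have := hturn i
    rw [Set.mem_Ico] at hi
    simp only [mem_wire_cons, mem_wire_nil, mem_rect]
    omega
  · intro i hi j hj hij z
    have := hx_mono hi hj hij
    have := hy_mono hi hj hij
    have := hturn i
    have := hturn j
    rw [Set.mem_Ico] at hi hj
    simp only [mem_wire_cons, mem_wire_nil]
    omega

/-- The wires leave a strip in rows `r₁..r₂`, turn around it and come back through the rows
`r₂ + 1..r₂ + (b - a)` below it. -/
lemma hasLinkage_return {c : ℤ} (hr : r₁ + (b - a) ≤ r₂ + 1) (hc : c + (b - a) ≤ c₂ + 1)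
    (hc₁ : c₁ + (b - a) ≤ c) :
    HasLinkage intGrid (Set.Ico a b)
      (rect r₁ r₂ c c₂ ∪ rect (r₂ + 1) (r₂ + (b - a)) c₁ c₂)
      (rowPorts a r₁ c) (colPorts b (r₂ + (b - a)) c₁) (fun _ => ∅) := by
  refine hasLinkage_wires (rowPorts a r₁ c)
    (fun i => [(r₁ + (i - a), c₂ - (i - a)), (r₂ + (b - i), c₂ - (i - a)),
      (r₂ + (b - i), c₁ + (b - 1 - i)), colPorts b (r₂ + (b - a)) c₁ i]) ?_ ?_
  · intro i hi z
    simp only [rowPorts, colPorts, mem_wire_cons, mem_wire_nil, mem_rect, Set.mem_Ico,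
      Set.mem_union] at hi ⊢
    omega
  · intro i hi j hj hij z
    simp only [rowPorts, colPorts, mem_wire_cons, mem_wire_nil, Set.mem_Ico] at hi hj ⊢
    omega

end Bundles

/-! ### Crossing a box -/

/-- The wires `a..b - 1` cross the box, entering at the top of its left column and leaving at the
bottom of its right column in the same order, and wire `i` visits all of `T i`. -/
def HasCrossing (a b : ℕ) (r₁ r₂ c₁ c₂ : ℤ) (T : ℕ → Set (ℤ × ℤ)) : Prop :=
  HasLinkage intGrid (Set.Ico a b) (rect r₁ r₂ c₁ c₂) (rowPorts a r₁ c₁)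
    (rowPorts a (r₂ + 1 - (b - a)) c₂) T

/-- Some range of the wires `a..b - 1` crosses the box, and only these wires have targets there;
the remaining wires have to bypass the box. -/
def HasSubcrossing (a b : ℕ) (r₁ r₂ c₁ c₂ : ℤ) (T : ℕ → Set (ℤ × ℤ)) : Prop :=
  ∃ a' b' : ℕ, a ≤ a' ∧ a' ≤ b' ∧ b' ≤ b ∧ HasCrossing a' b' r₁ r₂ c₁ c₂ T ∧
    ∀ i ∈ Set.Ico a b, (T i).Nonempty → i ∈ Set.Ico a' b'

lemma hasCrossing_of_le_add_one {a b : ℕ} {r₁ r₂ c₁ c₂ : ℤ} (hab : a ≤ b) (hba : b ≤ a + 1)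
    (hr : r₁ ≤ r₂) (hc : c₁ ≤ c₂) :
    HasCrossing a b r₁ r₂ c₁ c₂ (fun _ => rect r₁ r₂ c₁ c₂) := by
  refine ⟨fun _ => rect r₁ r₂ c₁ c₂, fun i hi j hj hij => ?_, fun i hi =>
    ⟨preconnected_rect _ _ _ _, subset_rfl, ?_, ?_, subset_rfl⟩⟩
  · rw [Set.mem_Ico] at hi hj
    omega
  all_goals
    rw [Set.mem_Ico] at hi
    simp only [rowPorts, mem_rect]
    omega

/-- The row of wire `i` when the wires `a'..b' - 1` pass through a box and the other wires `≥ a`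
pass above and below it; `above`, `inside` and `below` are the first rows of the three groups. -/
def detourRow (a a' b' : ℕ) (above inside below : ℤ) (i : ℕ) : ℤ :=
  if i < a' then above + (i - a) else if i < b' then inside + (i - a') else below + (i - b')

section Cell

variable {a b a' b' : ℕ} {above inside below r₁ r₂ c₁ c₂ : ℤ} {T : ℕ → Set (ℤ × ℤ)}

lemma detourRow_cases (a a' b' : ℕ) (above inside below : ℤ) (i : ℕ) :
    (i < a' ∧ detourRow a a' b' above inside below i = above + (i - a)) ∨
      (a' ≤ i ∧ i < b' ∧ detourRow a a' b' above inside below i = inside + (i - a')) ∨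
      (a' ≤ i ∧ b' ≤ i ∧ detourRow a a' b' above inside below i = below + (i - b')) := by
  unfold detourRow
  split_ifs <;> omega

lemma strictMonoOn_detourRow {above inside below : ℤ} (h : a' ≤ b') (h₁ : above + (a' - a) ≤ inside)
    (h₂ : inside + (b' - a') ≤ below) :
    StrictMonoOn (detourRow a a' b' above inside below) (Set.Ici a) := by
  intro i _ j _ hij
  have := detourRow_cases a a' b' above inside below i
  have := detourRow_cases a a' b' above inside below j
  omega

lemma HasLinkage.bypass {C C' : Set ℕ} {x y : ℕ → ℤ} {s₁ s₂ : ℤ} (hC : C' ⊆ C)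
    (h : HasLinkage intGrid C' (rect r₁ r₂ c₁ c₂) (fun i => (x i, c₁)) (fun i => (y i, c₂)) T)
    (hinj : Set.InjOn x (C \ C')) (hxy : Set.EqOn x y (C \ C'))
    (hx : Set.MapsTo x (C \ C') (Set.Icc s₁ s₂ \ Set.Icc r₁ r₂))
    (hT : ∀ i ∈ C \ C', T i = ∅) (hr₁ : s₁ ≤ r₁) (hr₂ : r₂ ≤ s₂) (hc : c₁ ≤ c₂) :
    HasLinkage intGrid C (rect s₁ s₂ c₁ c₂) (fun i => (x i, c₁)) (fun i => (y i, c₂)) T := by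
  have hout := ((hasLinkage_horizontal hc hinj hx).congr (B' := fun i => (y i, c₂))
    (fun _ _ => rfl) fun i hi => Prod.ext (hxy hi) rfl).mono subset_rfl fun i hi => (hT i hi).subset
  have hunion := h.union hout (Set.disjoint_left.2 fun z hz hz' => hz'.1.2 hz.1)
    Set.disjoint_sdiff_right
  rw [Set.union_sdiff_cancel hC] at hunion
  refine hunion.mono (Set.union_subset ?_ ?_) fun _ _ => subset_rfl
  · exact Set.prod_mono (Set.Icc_subset_Icc hr₁ hr₂) subset_rfl
  · exact Set.prod_mono Set.sdiff_subset subset_rfl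

lemma HasCrossing.hasLinkage_detourRow (h : HasCrossing a' b' r₁ r₂ c₁ c₂ T) (ha : a ≤ a')
    (hab : a' ≤ b') (hb : b' ≤ b) (hr : r₁ ≤ r₂ + 1) (hc : c₁ ≤ c₂)
    (hT : ∀ i ∈ Set.Ico a b, (T i).Nonempty → i ∈ Set.Ico a' b') :
    HasLinkage intGrid (Set.Ico a b) (rect (r₁ - (b - a)) (r₂ + (b - a)) c₁ c₂)
      (fun i => (detourRow a a' b' (r₁ - (b - a)) r₁ (r₂ + 1) i, c₁))
      (fun i => (detourRow a a' b' (r₁ - (b - a)) (r₂ + 1 - (b' - a')) (r₂ + 1) i, c₂)) T := by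
  have hcases := detourRow_cases a a' b' (r₁ - (b - a)) r₁ (r₂ + 1)
  have hcases' := detourRow_cases a a' b' (r₁ - (b - a)) (r₂ + 1 - (b' - a')) (r₂ + 1)
  have hinside := h.congr
    (A' := fun i => (detourRow a a' b' (r₁ - (b - a)) r₁ (r₂ + 1) i, c₁))
    (B' := fun i => (detourRow a a' b' (r₁ - (b - a)) (r₂ + 1 - (b' - a')) (r₂ + 1) i, c₂))
    (fun i hi => Prod.ext (by
      have := hcases i; rw [Set.mem_Ico] at hi; simp only [rowPorts]; omega) rfl)
    (fun i hi => Prod.ext (by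
      have := hcases' i; rw [Set.mem_Ico] at hi; simp only [rowPorts]; omega) rfl)
  refine hinside.bypass (Set.Ico_subset_Ico ha hb) ?_ ?_ ?_ ?_ (by omega) (by omega) hc
  · intro i hi j hj
    have := hcases i
    have := hcases j
    simp only [Set.mem_sdiff, Set.mem_Ico] at hi hj
    omega
  · intro i hi
    have := hcases i
    have := hcases' i
    simp only [Set.mem_sdiff, Set.mem_Ico] at hi
    omega
  · intro i hi
    have := hcases i
    simp only [Set.mem_sdiff, Set.mem_Ico, Set.mem_Icc] at hi ⊢
    omega
  · exact fun i hi => Set.not_nonempty_iff_eq_empty.1 fun hne => hi.2 (hT i hi.1 hne)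

/-- The wires that do not enter the box pass in order above and below it. -/
lemma HasSubcrossing.hasLinkage_cell (h : HasSubcrossing a b r₁ r₂ c₁ c₂ T)
    (hr : r₁ + (b - a) ≤ r₂ + 1) (hc : c₁ ≤ c₂) :
    HasLinkage intGrid (Set.Ico a b)
      (rect (r₁ - (b - a)) (r₂ + (b - a)) (c₁ - (b - a)) (c₂ + (b - a)))
      (rowPorts a (r₁ - (b - a)) (c₁ - (b - a))) (rowPorts a (r₁ - (b - a)) (c₂ + (b - a))) T := by
  obtain ⟨a', b', ha, hab, hb, hcross, hT⟩ := h
  have hdetour : ∀ inside : ℤ, r₁ ≤ inside → inside + (b' - a') ≤ r₂ + 1 →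
      StrictMonoOn (detourRow a a' b' (r₁ - (b - a)) inside (r₂ + 1)) (Set.Ico a b) ∧
      ∀ i ∈ Set.Ico a b, r₁ - (b - a) ≤ detourRow a a' b' (r₁ - (b - a)) inside (r₂ + 1) i ∧
        detourRow a a' b' (r₁ - (b - a)) inside (r₂ + 1) i ≤ r₂ + (b - a) := by
    refine fun inside h₁ h₂ => ⟨(strictMonoOn_detourRow hab (by omega) h₂).mono
      Set.Ico_subset_Ici_self, fun i hi => ?_⟩
    have := detourRow_cases a a' b' (r₁ - (b - a)) inside (r₂ + 1) i
    rw [Set.mem_Ico] at hi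
    omega
  have hports_mono : StrictMonoOn (fun i : ℕ => r₁ - (b - a) + ((i : ℤ) - a)) (Set.Ico a b) :=
    fun i _ j _ hij => by simpa using hij
  have hports : ∀ i ∈ Set.Ico a b, r₁ - (b - a) ≤ r₁ - (b - a) + ((i : ℤ) - a) ∧
      r₁ - (b - a) + ((i : ℤ) - a) ≤ r₂ + (b - a) := fun i hi => by
    rw [Set.mem_Ico] at hi
    omega
  obtain ⟨hleft_mono, hleft⟩ := hdetour r₁ le_rfl (by omega)
  obtain ⟨hright_mono, hright⟩ := hdetour (r₂ + 1 - (b' - a')) (by omega) (by omega)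
  have hin := hasLinkage_shift (c₁ := c₁ - (b - a)) (c₂ := c₁ - 1) (by omega) hports_mono
    hleft_mono hports hleft
  have hout := hasLinkage_shift (c₁ := c₂ + 1) (c₂ := c₂ + (b - a)) (by omega) hright_mono
    hports_mono hright hports
  have hmid := hcross.hasLinkage_detourRow ha hab hb (by omega) hc hT
  have hcell := (hin.trans_right hmid (by omega) (by omega) (by omega)
    fun i _ => ⟨rfl, by simp⟩).trans_right hout rfl (by omega) (by omega) fun i _ => ⟨rfl, rfl⟩
  refine hcell.mono subset_rfl fun i _ => ?_
  exact Set.subset_union_of_subset_left Set.subset_union_right _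

end Cell

/-! ### The snake -/

/-- The intervals `[lo x, hi x]`, `x ∈ X`, lie in `[p, q]` in the order of `X`, with at least `m`
further integers of `[p, q]` before the first, after the last and between any two of them. -/
structure IsSpaced {κ : Type*} [LinearOrder κ] (X : Finset κ) (lo hi : κ → ℤ) (m p q : ℤ) :
    Prop where
  le : ∀ x ∈ X, lo x ≤ hi x
  sep : ∀ x ∈ X, ∀ x' ∈ X, x < x' → hi x + m < lo x'
  left : ∀ x ∈ X, p + m ≤ lo x
  right : ∀ x ∈ X, hi x + m ≤ q

section Spaced

variable {κ : Type*} [LinearOrder κ] {X : Finset κ} {lo hi : κ → ℤ}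

lemma IsSpaced.widen {m p q m' p' q' k k' : ℤ} (h : IsSpaced X lo hi m p q) (hk : 0 ≤ k)
    (hk' : 0 ≤ k') (hm : m' + k + k' ≤ m) (hp : p' + m' + k ≤ p + m) (hq : q + m' + k' ≤ q' + m) :
    IsSpaced X (fun x => lo x - k) (fun x => hi x + k') m' p' q' where
  le x hx := by have := h.le x hx; omega
  sep x hx x' hx' hlt := by have := h.sep x hx x' hx' hlt; omega
  left x hx := by have := h.left x hx; omega
  right x hx := by have := h.right x hx; omega

lemma IsSpaced.induction {P : ℤ → ℤ → Finset κ → Prop} {p q : ℤ}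
    (hempty : ∀ p q, p ≤ q → P p q ∅)
    (hglue : ∀ p q r X Y, p ≤ q → q < r → P p q X → P (q + 1) r Y → P p r (X ∪ Y))
    (hcell : ∀ x ∈ X, P (lo x) (hi x) {x}) (hX : IsSpaced X lo hi 1 p q) (hpq : p ≤ q) :
    P p q X := by
  induction X using Finset.induction_on_max generalizing q with
  | empty => exact hempty p q hpq
  | insert x X hmax ih =>
    have hx := mem_insert_self x X
    have hsub := subset_insert x X
    have := hX.le x hx
    have := hX.left x hx
    have := hX.right x hx
    have hbefore : P p (lo x - 1) X := by
      refine ih (fun y hy => hcell y (hsub hy)) ⟨fun y hy => hX.le y (hsub hy),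
        fun y hy y' hy' => hX.sep y (hsub hy) y' (hsub hy'), fun y hy => hX.left y (hsub hy),
        fun y hy => ?_⟩ (by omega)
      have := hX.sep y (hsub hy) x hx (hmax y hy)
      omega
    have hthrough := hglue p (lo x - 1) (hi x) X {x} (by omega) (by omega) hbefore
      (by rw [sub_add_cancel]; exact hcell x hx)
    have hafter := hglue p (hi x) q (X ∪ {x}) ∅ (by omega) (by omega) hthrough
      (hempty _ _ (by omega))
    rwa [union_empty, union_comm, ← insert_eq] at hafter

end Spaced

section Snake

variable {κ κ' : Type*} [LinearOrder κ] [LinearOrder κ'] {X : Finset κ} {Y : Finset κ'}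
  {left right : κ → ℤ} {top bottom : κ' → ℤ} {a b : ℕ} {r₁ r₂ c₁ c₂ : ℤ}

lemma hasLinkage_strip {T : κ → ℕ → Set (ℤ × ℤ)} (hr : r₁ + (b - a) ≤ r₂ + 1)
    (hab : a ≤ b) (hX : IsSpaced X left right (2 * (b - a) + 1) c₁ c₂) (hc : c₁ ≤ c₂)
    (hbox : ∀ x ∈ X, HasSubcrossing a b r₁ r₂ (left x) (right x) (T x)) :
    HasLinkage intGrid (Set.Ico a b) (rect (r₁ - (b - a)) (r₂ + (b - a)) c₁ c₂)
      (rowPorts a (r₁ - (b - a)) c₁) (rowPorts a (r₁ - (b - a)) c₂)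
      (fun i => ⋃ x ∈ X, T x i) := by
  refine IsSpaced.induction (P := fun p q X => HasLinkage intGrid (Set.Ico a b)
    (rect (r₁ - (b - a)) (r₂ + (b - a)) p q) (rowPorts a (r₁ - (b - a)) p)
    (rowPorts a (r₁ - (b - a)) q) (fun i => ⋃ x ∈ X, T x i)) ?_ ?_ (fun x hx => ?_)
    (hX.widen (k := b - a) (k' := b - a) (m' := 1) (p' := c₁) (q' := c₂) (by omega) (by omega)
      (by omega) (by omega) (by omega)) hc
  · intro p q hpq
    exact (hasLinkage_rowPorts le_rfl (by omega) hpq).mono subset_rfl fun i _ => by simp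
  · intro p q r X Y hpq hqr h h'
    refine (h.trans_right h' rfl (by omega) (by omega) fun i _ => ⟨rfl, rfl⟩).mono subset_rfl
      fun i _ => ?_
    rw [Finset.set_biUnion_union]
  · simpa only [Finset.set_biUnion_singleton] using
      (hbox x hx).hasLinkage_cell hr (hX.le x hx)

lemma HasLinkage.pass {T : ℕ → Set (ℤ × ℤ)} (hab : a ≤ b)
    (hr : r₁ + (b - a) ≤ r₂ + 1) (hc : c₁ + 2 * (b - a) ≤ c₂)
    (h : HasLinkage intGrid (Set.Ico a b) (rect r₁ r₂ (c₁ + (b - a)) (c₂ - (b - a)))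
      (rowPorts a r₁ (c₁ + (b - a))) (rowPorts a r₁ (c₂ - (b - a))) T) :
    HasLinkage intGrid (Set.Ico a b) (rect r₁ (r₂ + (b - a)) c₁ c₂) (colPorts b r₁ c₁)
      (colPorts b (r₂ + (b - a)) c₁) T := by
  have hin : HasLinkage intGrid (Set.Ico a b) (rect r₁ r₂ c₁ (c₁ + (b - a) - 1))
      (colPorts b r₁ c₁) (rowPorts a r₁ (c₁ + (b - a) - 1)) (fun _ => ∅) :=
    hasLinkage_colPorts_rowPorts hr (by omega)
  have hout := hasLinkage_return (a := a) (b := b) (c := c₂ - (b - a) + 1) (c₁ := c₁) (c₂ := c₂)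
    hr (by omega) (by omega)
  have hstrip := hin.trans_right h (by omega) (by omega) (by omega) fun i _ => ⟨rfl, by
    simp only [rowPorts]; omega⟩
  refine (hstrip.trans hout (Set.disjoint_left.2 fun z => ?_) fun i _ =>
    intGrid_adj_iff.2 (.inl ⟨rfl, .inl rfl⟩)).mono (fun z => ?_) fun i _ => ?_
  · simp only [Set.mem_union, mem_rect]
    omega
  · simp only [Set.mem_union, mem_rect]
    omega
  · exact Set.subset_union_of_subset_left Set.subset_union_right _

lemma hasLinkage_stack {T : κ' → ℕ → Set (ℤ × ℤ)} (hY : IsSpaced Y top bottom 1 r₁ r₂)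
    (hr : r₁ ≤ r₂) (hc : c₁ + (b - a) ≤ c₂ + 1)
    (hpass : ∀ y ∈ Y, HasLinkage intGrid (Set.Ico a b) (rect (top y) (bottom y) c₁ c₂)
      (colPorts b (top y) c₁) (colPorts b (bottom y) c₁) (T y)) :
    HasLinkage intGrid (Set.Ico a b) (rect r₁ r₂ c₁ c₂) (colPorts b r₁ c₁) (colPorts b r₂ c₁)
      (fun i => ⋃ y ∈ Y, T y i) := by
  refine IsSpaced.induction (P := fun p q Y => HasLinkage intGrid (Set.Ico a b)
    (rect p q c₁ c₂) (colPorts b p c₁) (colPorts b q c₁) (fun i => ⋃ y ∈ Y, T y i)) ?_ ?_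
    (fun y hy => ?_) hY hr
  · intro p q hpq
    exact (hasLinkage_colPorts hpq hc).mono subset_rfl fun i _ => by simp
  · intro p q r Y Y' hpq hqr h h'
    refine (h.trans_below h' rfl (by omega) (by omega) fun i _ => ⟨rfl, rfl⟩).mono subset_rfl
      fun i _ => ?_
    rw [Finset.set_biUnion_union]
  · simpa only [Finset.set_biUnion_singleton] using hpass y hy

/-- The snake: on the left the wires turn down, they pass along each row of boxes from left to right
and return below it, and at the bottom they turn right again. -/
lemma hasCrossing_of_forall_hasSubcrossing {T : κ' → κ → ℕ → Set (ℤ × ℤ)} (hab : a ≤ b)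
    (hr : r₁ + 2 * (b - a) < r₂) (hc : c₁ + 2 * (b - a) ≤ c₂)
    (hY : IsSpaced Y top bottom (3 * (b - a) + 1) r₁ r₂)
    (hX : IsSpaced X left right (3 * (b - a) + 1) c₁ c₂)
    (hheight : ∀ y ∈ Y, top y + (b - a) ≤ bottom y + 1)
    (hbox : ∀ y ∈ Y, ∀ x ∈ X,
      HasSubcrossing a b (top y) (bottom y) (left x) (right x) (T y x)) :
    HasCrossing a b r₁ r₂ c₁ c₂ (fun i => ⋃ y ∈ Y, ⋃ x ∈ X, T y x i) := by
  have hX' : IsSpaced X left right (2 * (b - a) + 1) (c₁ + (b - a)) (c₂ - (b - a)) := by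
    simpa using hX.widen (k := 0) (k' := 0) (m' := 2 * (b - a) + 1) (p' := c₁ + (b - a))
      (q' := c₂ - (b - a)) le_rfl le_rfl (by omega) (by omega) (by omega)
  have hpass (y) (hy : y ∈ Y) := (hasLinkage_strip (hheight y hy) hab hX' (by omega)
    (hbox y hy)).pass hab (by have := hY.le y hy; omega) hc
  have hstack := hasLinkage_stack (a := a) (b := b)
    (hY.widen (k := b - a) (k' := b - a + (b - a)) (m' := 1)
      (p' := r₁ + (b - a)) (q' := r₂ - (b - a)) (by omega) (by omega) (by omega) (by omega)
      (by omega)) (by omega) (c₁ := c₁) (c₂ := c₂) (by omega)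
    fun y hy => by simpa only [← add_assoc] using hpass y hy
  have htop : HasLinkage intGrid (Set.Ico a b) (rect r₁ (r₁ + (b - a) - 1) c₁ c₂)
      (rowPorts a r₁ c₁) (colPorts b (r₁ + (b - a) - 1) c₁) (fun _ => ∅) :=
    hasLinkage_rowPorts_colPorts (by omega) (by omega)
  have hbottom : HasLinkage intGrid (Set.Ico a b) (rect (r₂ + 1 - (b - a)) r₂ c₁ c₂)
      (colPorts b (r₂ + 1 - (b - a)) c₁) (rowPorts a (r₂ + 1 - (b - a)) c₂) (fun _ => ∅) :=
    hasLinkage_colPorts_rowPorts (by omega) (by omega)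
  have hupper := htop.trans_below hstack (by omega) (by omega) (by omega) fun i _ => ⟨rfl, by
    simp only [colPorts]; omega⟩
  refine (hupper.trans_below hbottom (by omega) (by omega) (by omega) fun i _ => ⟨rfl, by
    simp only [colPorts]; omega⟩).mono subset_rfl fun i _ => ?_
  exact Set.subset_union_of_subset_left Set.subset_union_right _

end Snake

/-! ### Routing in the square grid -/

/-- The embedding of the vertices of `gridG ℓ` into the integer grid. -/
def toInt (v : Vtx) : ℤ × ℤ := (v.1, v.2)

lemma gridG_adj_iff {ℓ : ℕ} {u v : Vtx} : (gridG ℓ).Adj u v ↔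
    ((1 ≤ u.1 ∧ u.1 ≤ ℓ ∧ 1 ≤ u.2 ∧ u.2 ≤ ℓ) ∧ 1 ≤ v.1 ∧ v.1 ≤ ℓ ∧ 1 ≤ v.2 ∧ v.2 ≤ ℓ) ∧
      (u.1 = v.1 ∧ (u.2 + 1 = v.2 ∨ v.2 + 1 = u.2) ∨
        u.2 = v.2 ∧ (u.1 + 1 = v.1 ∨ v.1 + 1 = u.1)) := by
  simp only [gridG, rectGrid, SimpleGraph.fromRel_adj, ne_eq, Prod.ext_iff]
  omega

lemma preconnected_preimage_toInt {ℓ : ℕ} {S : Set (ℤ × ℤ)}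
    (hS : (intGrid.induce S).Preconnected) (hsub : S ⊆ rect 1 ℓ 1 ℓ) :
    ((gridG ℓ).induce (toInt ⁻¹' S)).Preconnected := by
  have htoInt : ∀ z ∈ S, toInt (z.1.toNat, z.2.toNat) = z := fun z hz => by
    have := mem_rect.1 (hsub hz)
    apply Prod.ext <;> simp only [toInt] <;> omega
  let toGrid : intGrid.induce S →g (gridG ℓ).induce (toInt ⁻¹' S) :=
    { toFun := fun z => ⟨(z.1.1.toNat, z.1.2.toNat), (htoInt z z.2).symm ▸ z.2⟩
      map_rel' := by
        rintro ⟨z, hz⟩ ⟨w, hw⟩ h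
        have := mem_rect.1 (hsub hz)
        have := mem_rect.1 (hsub hw)
        simp only [SimpleGraph.comap_adj, Function.Embedding.subtype_apply, intGrid_adj_iff,
          gridG_adj_iff] at h ⊢
        omega }
  refine hS.map toGrid fun ⟨v, hv⟩ => ⟨⟨toInt v, hv⟩, Subtype.ext ?_⟩
  simp [toGrid, toInt]

lemma nodeDisjointRoutable_of_hasLinkage {ℓ : ℕ} {ι : Type*} {I : Finset ι} {g : ι → DPair}
    {B : ι → ℤ × ℤ} {T : ι → Set (ℤ × ℤ)}
    (h : HasLinkage intGrid (I : Set ι) (rect 1 ℓ 1 ℓ) (fun i => toInt (g i).1) B T)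
    (hT : ∀ i ∈ I, toInt (g i).2 ∈ T i) : NodeDisjointRoutable (gridG ℓ) (I.image g) := by
  obtain ⟨S, hdisj, hS⟩ := h
  refine nodeDisjointRoutable_image (S := fun i => toInt ⁻¹' S i)
    (fun i hi j hj hij => (hdisj hi hj hij).preimage _)
    (fun i hi => preconnected_preimage_toInt (hS i hi).1 (hS i hi).2.1) fun i hi => ?_
  obtain ⟨-, -, hA, -, hTS⟩ := hS i hi
  exact ⟨hA, hTS (hT i hi)⟩

/-! ### Canonical families -/

/-- The `d × d` square with top left corner `(p, q)`, for `0 < d`. -/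
def square (d p q : ℕ) : SquareSpec := (Icc p (p + d - 1), Icc q (q + d - 1))

/-- The first elements of those intervals of the family `Is`, all of size `d`, that are contained in
`P`. -/
def corners (d : ℕ) (Is : Finset (Finset ℕ)) (P : Finset ℕ) : Finset ℕ :=
  {p ∈ P | Icc p (p + d - 1) ∈ Is ∧ Icc p (p + d - 1) ⊆ P}

section Canonical

variable {W d : ℕ}

lemma eq_Icc_of_isCanonicalIntervals {Is : Finset (Finset ℕ)} (h : IsCanonicalIntervals W d Is)
    {I : Finset ℕ} (hI : I ∈ Is) : ∃ p, I = Icc p (p + d - 1) := by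
  obtain ⟨⟨p, p', -, hle, -, rfl⟩, hcard⟩ := h.1 I hI
  rw [Nat.card_Icc] at hcard
  exact ⟨p, by rw [← hcard]; congr 1; omega⟩

lemma mem_Icc_of_isCanonicalIntervals {Is : Finset (Finset ℕ)}
    (h : IsCanonicalIntervals W d Is) {I : Finset ℕ} (hI : I ∈ Is) {i : ℕ} (hi : i ∈ I) :
    i ∈ Icc 1 W := by
  obtain ⟨⟨p, q, hp, -, hq, rfl⟩, -⟩ := h.1 I hI
  exact Icc_subset_Icc hp hq hi

lemma eq_of_mem_of_isCanonicalIntervals {Is : Finset (Finset ℕ)} (h : IsCanonicalIntervals W d Is)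
    {I J : Finset ℕ} (hI : I ∈ Is) (hJ : J ∈ Is) {i : ℕ} (hiI : i ∈ I) (hiJ : i ∈ J) : I = J := by
  by_contra hne
  have hsep := h.2 I hI J hJ hne i hiI i hiJ
  rw [sub_self, abs_zero] at hsep
  omega

lemma mem_corners {Is : Finset (Finset ℕ)} {P : Finset ℕ} {p : ℕ} (hd : 0 < d) :
    p ∈ corners d Is P ↔ Icc p (p + d - 1) ∈ Is ∧ Icc p (p + d - 1) ⊆ P := by
  rw [corners, mem_filter, and_iff_right_iff_imp]
  exact fun h => h.2 (mem_Icc.2 ⟨le_rfl, by omega⟩)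

lemma add_two_mul_le_of_isCanonicalIntervals {Is : Finset (Finset ℕ)}
    (h : IsCanonicalIntervals W d Is) (hd : 0 < d) {p p' : ℕ} (hp : Icc p (p + d - 1) ∈ Is)
    (hp' : Icc p' (p' + d - 1) ∈ Is) (hlt : p < p') : p + 2 * d ≤ p' := by
  have hne : Icc p (p + d - 1) ≠ Icc p' (p' + d - 1) := fun heq => by
    have hmem : p ∈ Icc p' (p' + d - 1) := heq ▸ mem_Icc.2 ⟨le_rfl, by omega⟩
    rw [mem_Icc] at hmem
    omega
  -- If the intervals overlapped, they would share the element `min (p + d - 1) p' = p'`.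
  have hsep := h.2 _ hp _ hp' hne (min (p + d - 1) p') (mem_Icc.2 (by omega)) p'
    (mem_Icc.2 (by omega))
  rw [lt_abs] at hsep
  omega

lemma isSpaced_corners {Is : Finset (Finset ℕ)} (h : IsCanonicalIntervals W d Is) (hd : 0 < d)
    (P₁ P₂ : ℕ) : IsSpaced (corners d Is (Icc P₁ P₂)) (fun p => (p : ℤ)) (fun p => p + d - 1) d
      (P₁ - d) (P₂ + d) := by
  have hwindow : ∀ p ∈ corners d Is (Icc P₁ P₂), P₁ ≤ p ∧ p + d - 1 ≤ P₂ := fun p hp =>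
    (Icc_subset_Icc_iff (by omega)).1 ((mem_corners hd).1 hp).2
  refine ⟨fun p _ => by omega, fun p hp p' hp' hlt => ?_, fun p hp => ?_, fun p hp => ?_⟩
  · have := add_two_mul_le_of_isCanonicalIntervals h hd ((mem_corners hd).1 hp).1
      ((mem_corners hd).1 hp').1 hlt
    omega
  · have := hwindow p hp
    omega
  · have := hwindow p hp
    omega

variable {Qs : Finset SquareSpec}

lemma eq_square_of_isCanonicalSquares (h : IsCanonicalSquares W d Qs) {Q : SquareSpec}
    (hQ : Q ∈ Qs) : ∃ p q, Q = square d p q := by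
  obtain ⟨I₁, I₂, h₁, h₂, rfl⟩ := h
  rw [mem_product] at hQ
  obtain ⟨p, hp⟩ := eq_Icc_of_isCanonicalIntervals h₁ hQ.1
  obtain ⟨q, hq⟩ := eq_Icc_of_isCanonicalIntervals h₂ hQ.2
  exact ⟨p, q, Prod.ext hp hq⟩

lemma mem_Icc_of_memSquare (h : IsCanonicalSquares W d Qs)
    {Q : SquareSpec} (hQ : Q ∈ Qs) {v : Vtx} (hv : memSquare v Q) :
    v.1 ∈ Icc 1 W ∧ v.2 ∈ Icc 1 W := by
  obtain ⟨I₁, I₂, h₁, h₂, rfl⟩ := h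
  rw [mem_product] at hQ
  exact ⟨mem_Icc_of_isCanonicalIntervals h₁ hQ.1 hv.1,
    mem_Icc_of_isCanonicalIntervals h₂ hQ.2 hv.2⟩

lemma eq_of_memSquare_of_isCanonicalSquares (h : IsCanonicalSquares W d Qs) {Q Q' : SquareSpec}
    (hQ : Q ∈ Qs) (hQ' : Q' ∈ Qs) {v : Vtx} (hv : memSquare v Q) (hv' : memSquare v Q') :
    Q = Q' := by
  obtain ⟨I₁, I₂, h₁, h₂, rfl⟩ := h
  rw [mem_product] at hQ hQ'
  exact Prod.ext (eq_of_mem_of_isCanonicalIntervals h₁ hQ.1 hQ'.1 hv.1 hv'.1)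
    (eq_of_mem_of_isCanonicalIntervals h₂ hQ.2 hQ'.2 hv.2 hv'.2)

lemma hasCrossing_of_isCanonicalSquares {a b P₁ P₂ Q₁ Q₂ : ℕ} {δ r₁ r₂ c₁ c₂ : ℤ}
    {T : SquareSpec → ℕ → Set (ℤ × ℤ)} (h : IsCanonicalSquares W d Qs) (hab : a ≤ b) (hδ : 0 ≤ δ)
    (hd : 3 * (b - a) + 1 + 2 * δ ≤ d) (hP : P₁ ≤ P₂) (hQ : Q₁ ≤ Q₂)
    (hr₁ : r₁ + 3 * (b - a) + 1 + δ ≤ P₁) (hr₂ : P₂ + 3 * (b - a) + 1 + δ ≤ r₂)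
    (hc₁ : c₁ + 3 * (b - a) + 1 + δ ≤ Q₁) (hc₂ : Q₂ + 3 * (b - a) + 1 + δ ≤ c₂)
    (hbox : ∀ p q, square d p q ∈ Qs → square d p q ≤ (Icc P₁ P₂, Icc Q₁ Q₂) →
      HasSubcrossing a b (p - δ) (p + d - 1 + δ) (q - δ) (q + d - 1 + δ) (T (square d p q))) :
    HasCrossing a b r₁ r₂ c₁ c₂
      (fun i => {z | ∃ Q ∈ Qs, Q ≤ (Icc P₁ P₂, Icc Q₁ Q₂) ∧ z ∈ T Q i}) := by
  have hd' : 0 < d := by omega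
  have hsq {Q : SquareSpec} (hQ : Q ∈ Qs) := eq_square_of_isCanonicalSquares h hQ
  obtain ⟨I₁, I₂, h₁, h₂, rfl⟩ := h
  have hrows := (isSpaced_corners h₁ hd' P₁ P₂).widen hδ hδ (m' := 3 * (b - a) + 1) (p' := r₁)
    (q' := r₂) (by omega) (by omega) (by omega)
  have hcols := (isSpaced_corners h₂ hd' Q₁ Q₂).widen hδ hδ (m' := 3 * (b - a) + 1) (p' := c₁)
    (q' := c₂) (by omega) (by omega) (by omega)
  refine (hasCrossing_of_forall_hasSubcrossing hab (by omega) (by omega) hrows hcols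
    (T := fun p q => T (square d p q)) (fun p _ => by omega) fun p hp q hq => ?_).mono subset_rfl ?_
  · rw [mem_corners hd'] at hp hq
    exact hbox p q (mem_product.2 ⟨hp.1, hq.1⟩) ⟨hp.2, hq.2⟩
  · rintro i - z ⟨Q, hQ, hle, hz⟩
    obtain ⟨p, q, rfl⟩ := hsq hQ
    rw [mem_product] at hQ
    simp only [Set.mem_iUnion]
    exact ⟨p, (mem_corners hd').2 ⟨hQ.1, hle.1⟩, q, (mem_corners hd').2 ⟨hQ.2, hle.2⟩, hz⟩

end Canonical

/-! ### Wires entering through an interval -/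

/-- The first of the wires `0..K - 1`, wire `i` starting in column `x i`, that starts in column `n`
or later, and `K` if there is none. -/
def firstWire (K : ℕ) (x : ℕ → ℕ) (n : ℕ) : ℕ :=
  Nat.find (p := fun i => i = K ∨ n ≤ x i) ⟨K, .inl rfl⟩

section FirstWire

variable {K : ℕ} {x : ℕ → ℕ}

lemma lt_firstWire_iff (hx : MonotoneOn x (Set.Iio K)) {i n : ℕ} :
    i < firstWire K x n ↔ i < K ∧ x i < n := by
  rw [firstWire, Nat.lt_find_iff]
  constructor
  · intro h
    have hiK : i < K := not_le.1 fun hKi => h K hKi (.inl rfl)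
    exact ⟨hiK, not_le.1 fun hn => h i le_rfl (.inr hn)⟩
  · rintro ⟨hiK, hin⟩ j hji (rfl | hnj)
    · omega
    · have := hx (Set.mem_Iio.2 (hji.trans_lt hiK)) (Set.mem_Iio.2 hiK) hji
      omega

lemma mem_Ico_firstWire_iff (hx : MonotoneOn x (Set.Iio K)) {i lo hi : ℕ} :
    i ∈ Set.Ico (firstWire K x lo) (firstWire K x (hi + 1)) ↔ i < K ∧ x i ∈ Icc lo hi := by
  rw [Set.mem_Ico, ← not_lt, lt_firstWire_iff hx, lt_firstWire_iff hx, mem_Icc]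
  omega

lemma firstWire_le (K : ℕ) (x : ℕ → ℕ) (n : ℕ) : firstWire K x n ≤ K :=
  Nat.find_min' _ (.inl rfl)

lemma firstWire_mono (K : ℕ) (x : ℕ → ℕ) : Monotone (firstWire K x) := fun _ _ h =>
  Nat.find_mono fun _ => Or.imp_right h.trans

lemma firstWire_le_add_of_card_le {y : ℕ → ℕ} {m s e lo hi : ℕ}
    (hy : StrictMonoOn y (Set.Iio m)) (hK : ∀ i < K, s * i < m)
    (hcard : #{j ∈ range m | y j ∈ Icc lo hi} ≤ s * e) :
    firstWire K (fun i => y (s * i)) (hi + 1) ≤ firstWire K (fun i => y (s * i)) lo + e := by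
  have hx : MonotoneOn (fun i => y (s * i)) (Set.Iio K) := fun i hi j hj hij =>
    hy.monotoneOn (hK i hi) (hK j hj) (Nat.mul_le_mul_left s hij)
  by_contra! hlt
  set i := firstWire K (fun i => y (s * i)) lo
  obtain ⟨hiK, hile⟩ := (mem_Ico_firstWire_iff hx).1
    (⟨le_rfl, by omega⟩ : i ∈ Set.Ico i (firstWire K (fun i => y (s * i)) (hi + 1)))
  obtain ⟨hjK, hjle⟩ := (mem_Ico_firstWire_iff hx).1
    (⟨by omega, hlt⟩ : i + e ∈ Set.Ico i _)
  rw [mem_Icc] at hile hjle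
  have hsub : Icc (s * i) (s * (i + e)) ⊆ {j ∈ range m | y j ∈ Icc lo hi} := fun j hj => by
    rw [mem_Icc] at hj
    have hjm : j < m := hj.2.trans_lt (hK _ hjK)
    rw [mem_filter, mem_range, mem_Icc]
    exact ⟨hjm, hile.1.trans (hy.monotoneOn (hK _ hiK) hjm hj.1),
      (hy.monotoneOn hjm (hK _ hjK) hj.2).trans hjle.2⟩
  have := (card_le_card hsub).trans hcard
  rw [Nat.card_Icc, mul_add] at this
  omega

end FirstWire

lemma add_le_of_strictMonoOn {x : ℕ → ℕ} {K : ℕ} (hx : StrictMonoOn x (Set.Iio K)) {i k : ℕ}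
    (h : i + k < K) : x i + k ≤ x (i + k) := by
  induction k with
  | zero => rfl
  | succ k ih =>
    have := ih (by omega)
    have : x (i + k) < x (i + (k + 1)) :=
      hx (Set.mem_Iio.2 (by omega)) (Set.mem_Iio.2 h) (by omega)
    omega

lemma exists_strictMonoOn_enumeration {α : Type*} [Nonempty α] {s : Finset α} {φ : α → ℕ}
    (hφ : Set.InjOn φ s) :
    ∃ g : ℕ → α, Set.MapsTo g (Set.Iio #s) s ∧ StrictMonoOn (φ ∘ g) (Set.Iio #s) := by
  have hfin : (Set.ofPred (· ∈ s.image φ)).Finite := (s.image φ).finite_toSet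
  have hcard : #hfin.toFinset = #s := by
    rw [← card_image_of_injOn hφ]
    exact congrArg card (Finset.ext fun n => hfin.mem_toFinset)
  have hnth {i : ℕ} (hi : i ∈ Set.Iio #s) : ∃ a ∈ (s : Set α), φ a = Nat.nth (· ∈ s.image φ) i :=
    mem_image.1 (Nat.nth_mem_of_lt_card hfin (hcard.symm ▸ hi))
  refine ⟨fun i => Function.invFunOn φ s (Nat.nth (· ∈ s.image φ) i),
    fun i hi => Function.invFunOn_mem (hnth hi), fun i hi j hj hij => ?_⟩
  rw [Function.comp_apply, Function.comp_apply, Function.invFunOn_eq (hnth hi),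
    Function.invFunOn_eq (hnth hj)]
  exact Nat.nth_strictMonoOn hfin (hcard.symm ▸ hi) (hcard.symm ▸ hj) hij

/-! ### Hierarchical systems of squares -/

lemma four_mul_pow_le {η : ℕ} (hη : 4 ≤ η) (k : ℕ) : 4 * η ^ k ≤ η ^ (k + 1) := by
  rw [pow_succ']
  exact Nat.mul_le_mul_right _ hη

section Hierarchy

variable {W ρ η : ℕ} {L : ℕ → ℕ} {Qs : ℕ → Finset SquareSpec} {f : ℕ → SquareSpec → Finset ℕ}

lemma eq_Icc_of_isLevelInterval {l : ℕ} {I : Finset ℕ} (h : IsLevelInterval W l I) (hl : 0 < l) :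
    ∃ lo hi, lo ≤ hi ∧ I = Icc lo hi := by
  obtain ⟨k, hk, rfl⟩ := h
  refine ⟨_, _, le_min ?_ hk, rfl⟩
  rw [add_mul, one_mul]
  omega

lemma exists_mem_coloring (hH : IsHierSquares W η ρ Qs) (hf : ValidColoring W ρ L Qs f) {v : Vtx}
    {c : ℕ} (hv : ∃ Q ∈ Qs ρ, memSquare v Q ∧ c ∈ f ρ Q) {h : ℕ} (h₁ : 1 ≤ h) (hρ : h ≤ ρ) :
    ∃ Q ∈ Qs h, memSquare v Q ∧ c ∈ f h Q := by
  induction hρ using Nat.decreasingInduction with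
  | self => exact hv
  | of_succ h hρ ih =>
    obtain ⟨Q, hQ, hvQ, hcQ⟩ := ih (by omega)
    obtain ⟨Q', hQ', hle⟩ := hH.2 (h + 1) (by omega) hρ Q hQ
    exact ⟨Q', hQ', ⟨hle.1 hvQ.1, hle.2 hvQ.2⟩,
      hf.2 (h + 1) (by omega) hρ Q hQ Q' hQ' hle hcQ⟩

/-- The target of wire `i`, as a set, if it lies in `Q`, and the empty set otherwise. -/
def targets (v : ℕ → Vtx) (Q : SquareSpec) (i : ℕ) : Set (ℤ × ℤ) :=
  {z | z = toInt (v i) ∧ memSquare (v i) Q}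

/-- The wires `0..K - 1`, wire `i` leading from column `x i` of the top row to `v i`, obey the
coloring `f`, and every level-`h` interval of the top row contains at most `η ^ (ρ - h)` of their
sources: this is `η ^ 3` times sparser than what a perfect set of demand pairs satisfies. -/
structure IsSparse (W ρ η : ℕ) (L : ℕ → ℕ) (Qs : ℕ → Finset SquareSpec)
    (f : ℕ → SquareSpec → Finset ℕ) (K : ℕ) (x : ℕ → ℕ) (v : ℕ → Vtx) : Prop where
  strictMonoOn : StrictMonoOn x (Set.Iio K)
  exists_mem : ∀ i < K, ∃ Q ∈ Qs ρ, memSquare (v i) Q ∧ x i ∈ f ρ Q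
  firstWire_le_add : ∀ h, 1 ≤ h → h ≤ ρ → ∀ lo hi, IsLevelInterval W (L h) (Icc lo hi) →
    firstWire K x (hi + 1) ≤ firstWire K x lo + η ^ (ρ - h)

namespace IsSparse

variable {K : ℕ} {x : ℕ → ℕ} {v : ℕ → Vtx}

lemma hasSubcrossing (hs : IsSparse W ρ η L Qs f K x v) (hH : IsHierSquares W η ρ Qs)
    (hf : ValidColoring W ρ L Qs f) {h : ℕ} (h₁ : 1 ≤ h) (hρ : h ≤ ρ) {Q : SquareSpec}
    (hQ : Q ∈ Qs h) {lo hi a b : ℕ} (hfQ : f h Q = Icc lo hi) (hlohi : lo ≤ hi)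
    (ha : a ≤ firstWire K x lo) (hb : firstWire K x (hi + 1) ≤ b) (hbK : b ≤ K) {r₁ r₂ c₁ c₂ : ℤ}
    (hcross : HasCrossing (firstWire K x lo) (firstWire K x (hi + 1)) r₁ r₂ c₁ c₂ (targets v Q)) :
    HasSubcrossing a b r₁ r₂ c₁ c₂ (targets v Q) := by
  refine ⟨_, _, ha, firstWire_mono K x (by omega), hb, hcross, ?_⟩
  rintro i ⟨-, hib⟩ ⟨_, -, hvQ⟩
  have hiK : i < K := by omega
  obtain ⟨Q', hQ', hvQ', hxQ'⟩ := exists_mem_coloring hH hf (hs.exists_mem i hiK) h₁ hρ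
  rw [eq_of_memSquare_of_isCanonicalSquares (hH.1 h h₁ hρ) hQ' hQ hvQ' hvQ, hfQ] at hxQ'
  exact (mem_Ico_firstWire_iff hs.strictMonoOn.monotoneOn).2 ⟨hiK, hxQ'⟩

lemma exists_le_square (hs : IsSparse W ρ η L Qs f K x v) (hH : IsHierSquares W η ρ Qs)
    (hf : ValidColoring W ρ L Qs f) {h : ℕ} (h₁ : 1 ≤ h) (hρ : h + 1 ≤ ρ) {Q : SquareSpec}
    (hQ : Q ∈ Qs h) {i : ℕ} (hi : i < K) (hvQ : memSquare (v i) Q) :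
    ∃ Q' ∈ Qs (h + 1), Q' ≤ Q ∧ memSquare (v i) Q' := by
  obtain ⟨Q', hQ', hvQ', -⟩ := exists_mem_coloring hH hf (hs.exists_mem i hi) (by omega) hρ
  obtain ⟨Q'', hQ'', hle⟩ := hH.2 (h + 1) (by omega) hρ Q' hQ'
  obtain rfl := eq_of_memSquare_of_isCanonicalSquares (hH.1 h h₁ (by omega)) hQ'' hQ
    ⟨hle.1 hvQ'.1, hle.2 hvQ'.2⟩ hvQ
  exact ⟨Q', hQ', hle, hvQ'⟩

/-- For every level-`h` square, of side `d`, the wires starting in its interval cross the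
`d / 4`-neighbourhood of the square and visit their targets in the square. -/
def CrossesLevel (Qs : ℕ → Finset SquareSpec) (f : ℕ → SquareSpec → Finset ℕ) (K : ℕ) (x : ℕ → ℕ)
    (v : ℕ → Vtx) (h d : ℕ) : Prop :=
  ∀ ⦃p q lo hi : ℕ⦄, square d p q ∈ Qs h → f h (square d p q) = Icc lo hi → lo ≤ hi →
    HasCrossing (firstWire K x lo) (firstWire K x (hi + 1)) (p - d / 4) (p + d - 1 + d / 4)
      (q - d / 4) (q + d - 1 + d / 4) (targets v (square d p q))

lemma crossesLevel_last (hs : IsSparse W ρ η L Qs f K x v) (hf : ValidColoring W ρ L Qs f)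
    (hρ : 1 ≤ ρ) {d : ℕ} (hd : 0 < d) : CrossesLevel Qs f K x v ρ d := by
  intro p q lo hi hQ hfQ hlohi
  have hle := hs.firstWire_le_add ρ hρ le_rfl lo hi (hfQ ▸ hf.1 ρ hρ le_rfl _ hQ)
  rw [Nat.sub_self, pow_zero] at hle
  refine (hasCrossing_of_le_add_one (firstWire_mono K x (by omega)) hle (by omega)
    (by omega)).mono subset_rfl ?_
  rintro i - _ ⟨rfl, hv⟩
  simp only [memSquare, square, mem_Icc] at hv
  simp only [mem_rect, toInt]
  omega

lemma crossesLevel_of_succ (hs : IsSparse W ρ η L Qs f K x v) (hη : 4 ≤ η)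
    (hH : IsHierSquares W η ρ Qs) (hL : ∀ h, 1 ≤ h → h ≤ ρ → 0 < L h)
    (hf : ValidColoring W ρ L Qs f) {h : ℕ} (h₁ : 1 ≤ h) (hρ : h < ρ)
    (hsucc : CrossesLevel Qs f K x v (h + 1) (η ^ (ρ - (h + 1) + 3))) :
    CrossesLevel Qs f K x v h (η ^ (ρ - h + 3)) := by
  intro p q lo hi hQ hfQ hlohi
  have hle := hs.firstWire_le_add h h₁ hρ.le lo hi (hfQ ▸ hf.1 h h₁ hρ.le _ hQ)
  have hcanon := hH.1 (h + 1) (by omega) hρ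
  have hD : 4 * η ^ (ρ - (h + 1) + 3) ≤ η ^ (ρ - h + 3) := by
    rw [show ρ - h + 3 = ρ - (h + 1) + 3 + 1 by omega]
    exact four_mul_pow_le hη _
  have hd : 4 * (4 * η ^ (ρ - h)) ≤ η ^ (ρ - (h + 1) + 3) := by
    rw [show ρ - (h + 1) + 3 = ρ - h + 1 + 1 by omega]
    exact (Nat.mul_le_mul_left 4 (four_mul_pow_le hη _)).trans (four_mul_pow_le hη _)
  have hk : 0 < η ^ (ρ - h) := by positivity
  generalize η ^ (ρ - h + 3) = D at *
  generalize η ^ (ρ - (h + 1) + 3) = d at *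
  refine (hasCrossing_of_isCanonicalSquares (P₁ := p) (P₂ := p + D - 1) (Q₁ := q)
    (Q₂ := q + D - 1) (δ := d / 4) (T := targets v) hcanon (firstWire_mono K x (by omega))
    (by omega) (by omega) (by omega) (by omega) (by omega) (by omega) (by omega) (by omega)
    fun p' q' hQ' hQQ' => ?_).mono subset_rfl ?_
  · obtain ⟨lo', hi', hlohi', hfQ'⟩ := eq_Icc_of_isLevelInterval
      (hf.1 (h + 1) (by omega) hρ _ hQ') (hL (h + 1) (by omega) hρ)
    have hsub := hf.2 (h + 1) (by omega) hρ _ hQ' _ hQ hQQ'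
    rw [hfQ', Nat.add_sub_cancel, hfQ, Icc_subset_Icc_iff hlohi'] at hsub
    exact hs.hasSubcrossing hH hf (by omega) hρ hQ' hfQ' hlohi' (firstWire_mono K x hsub.1)
      (firstWire_mono K x (by omega)) (firstWire_le K x _) (hsucc hQ' hfQ' hlohi')
  · rintro i ⟨-, hi⟩ z ⟨hz, hv⟩
    obtain ⟨Q', hQ', hle', hv'⟩ := hs.exists_le_square hH hf h₁ hρ hQ
      (hi.trans_le (firstWire_le K x _)) hv
    exact ⟨Q', hQ', hle', hz, hv'⟩

lemma crossesLevel (hs : IsSparse W ρ η L Qs f K x v) (hη : 4 ≤ η) (hH : IsHierSquares W η ρ Qs)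
    (hL : ∀ h, 1 ≤ h → h ≤ ρ → 0 < L h) (hf : ValidColoring W ρ L Qs f) {h : ℕ} (h₁ : 1 ≤ h)
    (hρ : h ≤ ρ) : CrossesLevel Qs f K x v h (η ^ (ρ - h + 3)) := by
  induction hρ using Nat.decreasingInduction with
  | self => exact hs.crossesLevel_last hf h₁ (by positivity)
  | of_succ h hρ ih => exact hs.crossesLevel_of_succ hη hH hL hf h₁ hρ (ih (by omega))

end IsSparse

end Hierarchy

/-! ### Distance from the boundary -/

lemma margin_of_forall_lt_dist {ℓ D : ℕ} {v : Vtx} (hv₁ : v.1 ∈ Icc 1 ℓ) (hv₂ : v.2 ∈ Icc 1 ℓ)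
    (hfar : ∀ w, OnBoundary ℓ w → D < (gridG ℓ).dist v w) :
    v.1 ∈ Icc (D + 2) (ℓ - D - 1) ∧ v.2 ∈ Icc (D + 2) (ℓ - D - 1) := by
  simp only [mem_Icc] at hv₁ hv₂ ⊢
  have hup := dist_le_of_forall_adj_succ (G := gridG ℓ) (fun i => (v.1 - i, v.2)) (v.1 - 1)
    fun i hi => gridG_adj_iff.2 (by dsimp only; omega)
  have hdown := dist_le_of_forall_adj_succ (G := gridG ℓ) (fun i => (v.1 + i, v.2)) (ℓ - v.1)
    fun i hi => gridG_adj_iff.2 (by dsimp only; omega)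
  have hleft := dist_le_of_forall_adj_succ (G := gridG ℓ) (fun i => (v.1, v.2 - i)) (v.2 - 1)
    fun i hi => gridG_adj_iff.2 (by dsimp only; omega)
  have hright := dist_le_of_forall_adj_succ (G := gridG ℓ) (fun i => (v.1, v.2 + i)) (ℓ - v.2)
    fun i hi => gridG_adj_iff.2 (by dsimp only; omega)
  have := hfar (v.1 - (v.1 - 1), v.2) (by unfold OnBoundary; omega)
  have := hfar (v.1 + (ℓ - v.1), v.2) (by unfold OnBoundary; omega)
  have := hfar (v.1, v.2 - (v.2 - 1)) (by unfold OnBoundary; omega)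
  have := hfar (v.1, v.2 + (ℓ - v.2)) (by unfold OnBoundary; omega)
  simp only [Nat.sub_zero, add_zero, Prod.mk.eta] at hup hdown hleft hright
  omega

/-! ### The top level -/

/-- The wires start at `(1, x i)`, turn right into the rows above the box and reach it by going
around its top right corner. -/
lemma hasLinkage_sources {K : ℕ} {ℓ r₁ r₂ c₁ c₂ : ℤ} {x : ℕ → ℤ} (hr₁ : K < r₁)
    (hr : r₁ + K ≤ r₂ + 1) (hr₂ : r₂ ≤ ℓ) (hc₁ : 1 ≤ c₁) (hc : c₁ ≤ c₂) (hc₂ : c₂ + K < ℓ)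
    (hx : StrictMonoOn x (Set.Ico 0 K))
    (hx_mem : ∀ i ∈ Set.Ico 0 K, 1 ≤ x i ∧ x i + (K - 1 - i) ≤ ℓ) :
    HasLinkage intGrid (Set.Ico 0 K) (rect 1 ℓ 1 ℓ \ rect r₁ r₂ c₁ c₂) (fun i => (1, x i))
      (rowPorts 0 (r₂ + 1 - K) (c₂ + 1)) (fun _ => ∅) := by
  refine hasLinkage_wires (fun i => (1, x i))
    (fun i => [(K - i, x i), (K - i, ℓ - (K - 1 - i)), (r₂ - (K - 1 - i), ℓ - (K - 1 - i)),
      rowPorts 0 (r₂ + 1 - K) (c₂ + 1) i]) ?_ ?_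
  · intro i hi z
    have := hx_mem i hi
    simp only [rowPorts, mem_wire_cons, mem_wire_nil, mem_rect, Set.mem_Ico, Set.mem_sdiff,
      Nat.cast_zero] at hi ⊢
    omega
  · intro i hi j hj hij z
    have := hx_mem i hi
    have := hx_mem j hj
    have := hx hi hj hij
    simp only [rowPorts, mem_wire_cons, mem_wire_nil, Set.mem_Ico, Nat.cast_zero] at hi hj ⊢
    omega

lemma hasLinkage_of_hasCrossing {K : ℕ} {ℓ r₁ r₂ c₁ c₂ : ℤ} {x : ℕ → ℤ}
    {T : ℕ → Set (ℤ × ℤ)} (hr₁ : K < r₁) (hr : r₁ + K ≤ r₂ + 1) (hr₂ : r₂ ≤ ℓ) (hc₁ : 1 ≤ c₁)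
    (hc : c₁ ≤ c₂) (hc₂ : c₂ + K < ℓ) (hx : StrictMonoOn x (Set.Ico 0 K))
    (hx_mem : ∀ i ∈ Set.Ico 0 K, 1 ≤ x i ∧ x i + (K - 1 - i) ≤ ℓ)
    (hcross : HasCrossing 0 K r₁ r₂ c₁ c₂ T) :
    HasLinkage intGrid (Set.Ico 0 K) (rect 1 ℓ 1 ℓ) (fun i => (1, x i)) (rowPorts 0 r₁ c₁) T := by
  refine ((hasLinkage_sources hr₁ hr hr₂ hc₁ hc hc₂ hx hx_mem).trans hcross.symm
    Set.disjoint_sdiff_left fun i _ => intGrid_adj_iff.2 (.inl ⟨?_, .inr rfl⟩)).mono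
      (Set.union_subset Set.sdiff_subset ?_) fun i _ => Set.subset_union_right
  · simp only [rowPorts]
    omega
  · intro z hz
    rw [mem_rect] at hz ⊢
    omega

namespace IsSparse

variable {ℓ ρ η : ℕ} {L : ℕ → ℕ} {Qs : ℕ → Finset SquareSpec} {f : ℕ → SquareSpec → Finset ℕ}
  {K : ℕ} {x : ℕ → ℕ} {v : ℕ → Vtx}

lemma hasCrossing_grid (hs : IsSparse ℓ ρ η L Qs f K x v) (hη : 4 ≤ η)
    (hH : IsHierSquares ℓ η ρ Qs) (hL : ∀ h, 1 ≤ h → h ≤ ρ → 0 < L h)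
    (hf : ValidColoring ℓ ρ L Qs f) (hρ : 1 ≤ ρ) {d : ℕ} (hd : d = η ^ (ρ + 2)) (hK : 64 * K ≤ d)
    (hℓ : 2 * d < ℓ)
    (hv : ∀ i < K, (v i).1 ∈ Icc (2 * d + 2) (ℓ - 2 * d - 1) ∧
      (v i).2 ∈ Icc (2 * d + 2) (ℓ - 2 * d - 1)) :
    HasCrossing 0 K (d / 2) (ℓ - d / 2) (d / 2) (ℓ - d / 2) (fun i => {toInt (v i)}) := by
  have hlevel : d = η ^ (ρ - 1 + 3) := by rw [hd, show ρ + 2 = ρ - 1 + 3 by omega]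
  have hcanon := hH.1 1 le_rfl hρ
  rw [← hlevel] at hcanon
  have hd0 : 0 < d := hd ▸ by positivity
  refine (hasCrossing_of_isCanonicalSquares (P₁ := d + 1) (P₂ := ℓ - d) (Q₁ := d + 1)
    (Q₂ := ℓ - d) (δ := d / 4) (T := targets v) hcanon (Nat.zero_le K) (by omega) (by omega)
    (by omega) (by omega) (by omega) (by omega) (by omega) (by omega) fun p q hQ _ => ?_).mono
    subset_rfl ?_
  · obtain ⟨lo, hi, hlohi, hfQ⟩ := eq_Icc_of_isLevelInterval (hf.1 1 le_rfl hρ _ hQ)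
      (hL 1 le_rfl hρ)
    exact hs.hasSubcrossing hH hf le_rfl hρ hQ hfQ hlohi (Nat.zero_le _) (firstWire_le K x _) le_rfl
      (hlevel ▸ hs.crossesLevel hη hH hL hf le_rfl hρ (hlevel ▸ hQ) (hlevel ▸ hfQ) hlohi)
  · rintro i ⟨-, hiK⟩ z hz
    rw [Set.mem_singleton_iff] at hz
    obtain ⟨Q, hQ, hvQ, -⟩ := exists_mem_coloring hH hf (hs.exists_mem i hiK) le_rfl hρ
    obtain ⟨p, q, rfl⟩ := eq_square_of_isCanonicalSquares hcanon hQ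
    have hvi := hv i hiK
    refine ⟨_, hQ, ?_, hz, hvQ⟩
    simp only [memSquare, square, mem_Icc] at hvi hvQ
    exact ⟨Icc_subset_Icc (by omega) (by omega), Icc_subset_Icc (by omega) (by omega)⟩

lemma nodeDisjointRoutable {g : ℕ → DPair}
    (hs : IsSparse ℓ ρ η L Qs f K (fun i => (g i).1.2) (fun i => (g i).2)) (hη : 4 ≤ η)
    (hH : IsHierSquares ℓ η ρ Qs) (hL : ∀ h, 1 ≤ h → h ≤ ρ → 0 < L h)
    (hf : ValidColoring ℓ ρ L Qs f) (hρ : 1 ≤ ρ) (hK : K ≤ η ^ (ρ - 1))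
    (hsrc : ∀ i < K, OnTopRow ℓ (g i).1)
    (hfar : ∀ i < K, ∀ w, OnBoundary ℓ w → 2 * η ^ (ρ + 2) < (gridG ℓ).dist (g i).2 w) :
    NodeDisjointRoutable (gridG ℓ) ((range K).image g) := by
  rcases K.eq_zero_or_pos with rfl | hKpos
  · exact ⟨fun m => absurd m.2 (notMem_empty _), fun m => absurd m.2 (notMem_empty _),
      fun m => absurd m.2 (notMem_empty _)⟩
  have hmargin (i : ℕ) (hi : i < K) : (g i).2.1 ∈ Icc (2 * η ^ (ρ + 2) + 2)
      (ℓ - 2 * η ^ (ρ + 2) - 1) ∧ (g i).2.2 ∈ Icc (2 * η ^ (ρ + 2) + 2)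
      (ℓ - 2 * η ^ (ρ + 2) - 1) := by
    obtain ⟨Q, hQ, hv, -⟩ := hs.exists_mem i hi
    obtain ⟨hv₁, hv₂⟩ := mem_Icc_of_memSquare (hH.1 ρ hρ le_rfl) hQ hv
    exact margin_of_forall_lt_dist hv₁ hv₂ (hfar i hi)
  have hd : 4 * (4 * (4 * η ^ (ρ - 1))) ≤ η ^ (ρ + 2) := by
    rw [show ρ + 2 = ρ - 1 + 1 + 1 + 1 by omega]
    exact (Nat.mul_le_mul_left 4 ((Nat.mul_le_mul_left 4 (four_mul_pow_le hη _)).trans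
      (four_mul_pow_le hη _))).trans (four_mul_pow_le hη _)
  have hℓ : 4 * η ^ (ρ + 2) < ℓ := by
    have := mem_Icc.1 (hmargin 0 hKpos).1
    omega
  have hcross := hs.hasCrossing_grid hη hH hL hf hρ rfl (by omega) (by omega) hmargin
  generalize η ^ (ρ + 2) = d at *
  have hlinkage := hasLinkage_of_hasCrossing (ℓ := ℓ) (x := fun i => ((g i).1.2 : ℤ)) (by omega)
    (by omega) (by omega) (by omega) (by omega) (by omega)
    (fun i hi j hj hij => Nat.cast_lt.2 (hs.strictMonoOn hi.2 hj.2 hij)) (fun i hi => ?_) hcross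
  · rw [range_eq_Ico]
    refine nodeDisjointRoutable_of_hasLinkage (ℓ := ℓ) (T := fun i => {toInt (g i).2})
      (B := rowPorts 0 (d / 2) (d / 2)) ?_ fun i _ => rfl
    rw [coe_Ico]
    exact hlinkage.congr (fun i hi => Prod.ext (congrArg Nat.cast (hsrc i hi.2).1.symm) rfl)
      fun _ _ => rfl
  · rw [Set.mem_Ico] at hi
    have hgap := add_le_of_strictMonoOn hs.strictMonoOn (i := i) (k := K - 1 - i) (by omega)
    have hlast := hsrc (i + (K - 1 - i)) (by omega)
    have hi' := hsrc i hi.2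
    unfold OnTopRow at hlast hi'
    omega

end IsSparse

lemma exists_isSparse {ℓ ρ η K : ℕ} {L : ℕ → ℕ} {Qs : ℕ → Finset SquareSpec}
    {f : ℕ → SquareSpec → Finset ℕ} {M : Finset DPair} (hperf : PerfectFor ℓ ρ η L Qs f M)
    (hsrc : ∀ m ∈ M, OnTopRow ℓ m.1) (hdest : ∀ m ∈ M, ∃ Q ∈ Qs ρ, memSquare m.2 Q)
    (hη : 0 < η) (hK : ∀ i < K, η ^ 3 * i < #M) :
    ∃ g : ℕ → DPair, Set.MapsTo g (Set.Iio K) M ∧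
      IsSparse ℓ ρ η L Qs f K (fun i => (g i).1.2) (fun i => (g i).2) := by
  obtain ⟨hdistinct, -, hcolor, hcount⟩ := hperf
  have hinj : Set.InjOn (fun m : DPair => m.1.2) M := fun m hm m' hm' h =>
    hdistinct m hm m' hm' (Prod.ext ((hsrc m hm).1.trans (hsrc m' hm').1.symm) h)
  obtain ⟨g, hg, hmono⟩ := exists_strictMonoOn_enumeration hinj
  have hgK (i : ℕ) (hi : i < K) : g (η ^ 3 * i) ∈ M := hg (hK i hi)
  refine ⟨fun i => g (η ^ 3 * i), fun i hi => hgK i hi, ?_, fun i hi => ?_,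
    fun h h₁ hρ lo hi hI => ?_⟩
  · exact fun i hi j hj hij => hmono (hK i hi) (hK j hj) (by gcongr)
  · obtain ⟨Q, hQ, hv⟩ := hdest _ (hgK i hi)
    exact ⟨Q, hQ, hv, hcolor _ (hgK i hi) Q hQ hv⟩
  · refine firstWire_le_add_of_card_le (y := fun j => (g j).1.2) hmono hK ?_
    rw [← pow_add, add_comm 3]
    refine (card_le_card_of_injOn g (fun j hj => ?_) fun j hj j' hj' hjj' => ?_).trans
      (hcount h h₁ hρ _ hI)
    · rw [coe_filter, Set.mem_ofPred_eq, mem_range] at hj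
      exact mem_filter.2 ⟨hg hj.1, hj.2⟩
    · rw [coe_filter, Set.mem_ofPred_eq, mem_range] at hj hj'
      exact hmono.injOn hj.1 hj'.1 (congrArg (fun m : DPair => m.1.2) hjj')

lemma four_le_two_pow_ceil_sqrt_lg {n : ℕ} (hn : 2 < n) : 4 ≤ 2 ^ ⌈Real.sqrt (lg n)⌉₊ := by
  have hlg : 1 < lg n := by
    rw [lg, Real.lt_logb_iff_rpow_lt one_lt_two (by positivity), Real.rpow_one]
    exact_mod_cast hn
  have hceil : 1 < ⌈Real.sqrt (lg n)⌉₊ := by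
    rw [Nat.lt_ceil, Nat.cast_one]
    exact Real.lt_sqrt_of_sq_lt (by rwa [one_pow])
  exact Nat.pow_le_pow_right two_pos hceil

end SnakeRouting

open SnakeRouting

theorem statement5_general {ℓ η ρ : ℕ} (hη : 4 ≤ η) (hρ : 1 ≤ ρ) {Qs : ℕ → Finset SquareSpec}
    (hH : IsHierSquares ℓ η ρ Qs) {L : ℕ → ℕ} (hL : ∀ h, 1 ≤ h → h ≤ ρ → 0 < L h)
    {f : ℕ → SquareSpec → Finset ℕ} (hf : ValidColoring ℓ ρ L Qs f) {M : Finset DPair}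
    (hperf : PerfectFor ℓ ρ η L Qs f M) (hcard : #M ≤ η ^ (ρ + 2))
    (hsrc : ∀ m ∈ M, OnTopRow ℓ m.1) (hdest : ∀ m ∈ M, ∃ Q ∈ Qs ρ, memSquare m.2 Q)
    (hfar : ∀ m ∈ M, ∀ v, OnBoundary ℓ v → 2 * η ^ (ρ + 2) < (gridG ℓ).dist m.2 v) :
    ∃ N ⊆ M, ⌈(#M : ℝ) / η ^ 3⌉₊ ≤ #N ∧ NodeDisjointRoutable (gridG ℓ) N := by
  have hη₀ : (0 : ℝ) < η ^ 3 := by positivity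
  have hlt : ∀ i < ⌈(#M : ℝ) / η ^ 3⌉₊, η ^ 3 * i < #M := fun i hi => by
    rw [Nat.lt_ceil, lt_div_iff₀ hη₀, mul_comm] at hi
    exact_mod_cast hi
  have hle : ⌈(#M : ℝ) / η ^ 3⌉₊ ≤ η ^ (ρ - 1) := by
    rw [Nat.ceil_le, div_le_iff₀ hη₀]
    exact_mod_cast hcard.trans_eq (by rw [← pow_add]; congr 1; omega)
  obtain ⟨g, hgM, hs⟩ := exists_isSparse hperf hsrc hdest (by omega) hlt
  refine ⟨(range _).image g, image_subset_iff.2 fun i hi => hgM (mem_range.1 hi), ?_,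
    hs.nodeDisjointRoutable hη hH hL hf hρ hle (fun i hi => hsrc _ (hgM hi))
      fun i hi => hfar _ (hgM hi)⟩
  have hinj : Set.InjOn g (range ⌈(#M : ℝ) / η ^ 3⌉₊) := fun i hi j hj hij =>
    hs.strictMonoOn.injOn (mem_range.1 hi) (mem_range.1 hj) (congrArg (fun m => m.1.2) hij)
  rw [card_image_of_injOn hinj, card_range]

/-- Theorem: snake-like routing of a perfect set of demand pairs. -/
theorem statement5
    (ℓ n : ℕ) (hn : n = ℓ * ℓ)
    (η ρ : ℕ) (hη : η = 2 ^ ⌈Real.sqrt (lg n)⌉₊)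
    (hρ : 1 ≤ ρ) (hρ' : (ρ : ℝ) ≤ Real.sqrt (lg n))
    (hℓ : 8 * η ^ (ρ + 2) < ℓ)
    (Qs : ℕ → Finset SquareSpec) (hH : IsHierSquares ℓ η ρ Qs)
    (hdisj : ∀ h, 1 ≤ h → h ≤ ρ → ∀ Q ∈ Qs h, (1 : ℕ) ∉ Q.1)
    (L : ℕ → ℕ)
    (hLpow : ∀ h, 1 ≤ h → h ≤ ρ → ∃ k : ℕ, L h = η ^ k)
    (hLdec : ∀ h h', 1 ≤ h → h < h' → h' ≤ ρ → L h' < L h)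
    (f : ℕ → SquareSpec → Finset ℕ) (hf : ValidColoring ℓ ρ L Qs f)
    (M' : Finset DPair)
    (hperf : PerfectFor ℓ ρ η L Qs f M')
    (hcard : M'.card ≤ η ^ (ρ + 2))
    (hsrc : ∀ m ∈ M', OnTopRow ℓ m.1)
    (hdest : ∀ m ∈ M', ∃ Q ∈ Qs ρ, memSquare m.2 Q)
    (hfar : ∀ m ∈ M', ∀ v : Vtx, OnBoundary ℓ v →
      4 * η ^ (ρ + 2) < (gridG ℓ).dist m.2 v) :
    ∃ N ⊆ M', ⌈(M'.card : ℝ) / (2 * η ^ 3)⌉₊ ≤ N.card ∧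
      NodeDisjointRoutable (gridG ℓ) N := by
  have hd : 0 < η ^ (ρ + 2) := by rw [hη]; positivity
  have hη₄ : 4 ≤ η := hη ▸ four_le_two_pow_ceil_sqrt_lg (by nlinarith)
  have hL : ∀ h, 1 ≤ h → h ≤ ρ → 0 < L h := fun h h₁ hh => by
    obtain ⟨k, hk⟩ := hLpow h h₁ hh
    exact hk ▸ by positivity
  obtain ⟨N, hNM, hN, hroute⟩ := statement5_general hη₄ hρ hH hL hf hperf hcard hsrc hdest
    fun m hm v hv => (hfar m hm v hv).trans_le' (by omega)
  refine ⟨N, hNM, (Nat.ceil_mono ?_).trans hN, hroute⟩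
  gcongr
  exact le_mul_of_one_le_left (by positivity) one_le_two
end
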